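/- (Lempert) Let D ⊂ ℂ^n (n ≥ 2) be a bounded open convex set with real-analytic strictly convex boundary. For every point z ∈ D and every nonzero vector v ∈ ℂ^n there exists a stationary disc A of D with A(0) = z and A'(0) = λ v for some λ ∈ ℂ, λ ≠ 0. Moreover it is unique up to rotation: if A and B are two stationary discs of D with A(0) = B(0) = z and both A'(0) and B'(0) nonzero complex multiples of v, then there exists θ ∈ ℝ such that B(ζ) = A(e^{iθ} ζ) for all ζ in the closed unit disc. -/

import Mathlib

/-! Stationary discs are the solutions of an extremal problem.

*Existence.* Let `A` maximize `lam` among holomorphic maps of the unit disc into `closure D` with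
`A 0 = z` and `A' 0 = lam v` (`exists_extremal`). Comparison with discs lying inside `D`
(`IsExtremal.no_inner_disc`, `exists_inner_disc`) shows that the distance of `A ζ` to the boundary is
at most `C (1 - |ζ|) ^ β` (`IsExtremal.inset_le`). Strict convexity gives a quantitative supporting
hyperplane at each boundary point `b` (`IsConvexDomain.strong_support`), so that the holomorphic
function `-∑ j, ∂_j ρ(b) (A_j - b_j)` has nonnegative real part dominating `‖A - b‖ ^ 2`; with Harnack's
inequality the derivative of `A` grows at most like a power `(1 - |ζ|) ^ (β / 2 - 1)`
(`IsConvexDomain.deriv_bound`). By the Hardy–Littlewood theorem (`hardy_littlewood`), `A` extends to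
the closed disc as a Hölder map sending the circle into the boundary.

Since `A` is extremal, no holomorphic `φ` with `φ 0 = 0` and `φ' 0 = 0` points strictly into `D` along
the whole boundary of the disc (`IsConvexDomain.no_variation`). As `∑ j, ∂_j ρ(A) (A_j - z_j)` has
positive real part on the circle, the theorem of Privalov on conjugate functions (`privalov`) provides
a positive weight `p` turning this sum into the boundary value of a zero-free holomorphic function
(`exists_multiplier`). With this weight every test function can be corrected by a multiple of `A - z`
so that the first variation has constant sign on the circle. Hence `ζ p ∂_j ρ(A)` is orthogonal to the
holomorphic functions vanishing at `0` and therefore extends holomorphically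
(`exists_holo_of_orthogonal`, `IsConvexDomain.exists_dual`).

*Uniqueness.* Let `G` extend `ζ p ∂ρ(A)`, and let `B` be another disc with the same centre and
direction. The mean value property for `∑ j, G_j (A_j - B_j) / ζ` (`circleAverage_pairing`), whose real
part on the circle is nonnegative by strict convexity and vanishes only where `A = B`, shows that
the derivative of `A` at `0` is at least as large as that of `B`, with equality only for `A = B`
(`IsConvexDomain.stationary_dominates`). Rotating the parameter reduces to positive multiples of `v`.
-/

open Complex Metric Set

/-- The Wirtinger derivative `∂ρ/∂z_j` of a real-valued function `ρ` on `ℂⁿ`,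
expressed via the real Fréchet derivative:
`∂ρ/∂z_j = (1/2)(∂ρ/∂x_j - i ∂ρ/∂y_j)`. -/
noncomputable def wirtinger {n : ℕ} (ρ : EuclideanSpace ℂ (Fin n) → ℝ)
    (z : EuclideanSpace ℂ (Fin n)) (j : Fin n) : ℂ :=
  (1 / 2 : ℂ) *
    ((fderiv ℝ ρ z (EuclideanSpace.single j 1) : ℂ) -
      Complex.I * (fderiv ℝ ρ z (EuclideanSpace.single j Complex.I) : ℂ))

/-- `A : Δ̄ → D̄` is a stationary disc of the domain `D` with defining function `ρ`:
`A` is continuous on the closed unit disc, holomorphic on the open disc, nonconstant,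
maps the closed disc into `D̄` and the unit circle into `∂D`, and there is a positive
continuous weight `p` on the circle such that
`ζ ↦ ζ · p(ζ) · ∂ρ(A(ζ))` extends continuously to `Δ̄`, holomorphically to `Δ`. -/
def IsStationaryDisc {n : ℕ} (ρ : EuclideanSpace ℂ (Fin n) → ℝ)
    (D : Set (EuclideanSpace ℂ (Fin n))) (A : ℂ → EuclideanSpace ℂ (Fin n)) : Prop :=
  ContinuousOn A (closedBall 0 1) ∧
  DifferentiableOn ℂ A (ball 0 1) ∧
  (¬ ∃ c, ∀ ζ ∈ closedBall (0 : ℂ) 1, A ζ = c) ∧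
  (∀ ζ ∈ closedBall (0 : ℂ) 1, A ζ ∈ closure D) ∧
  (∀ ζ ∈ sphere (0 : ℂ) 1, A ζ ∈ frontier D) ∧
  ∃ p : ℂ → ℝ, ContinuousOn p (sphere 0 1) ∧ (∀ ζ ∈ sphere (0 : ℂ) 1, 0 < p ζ) ∧
    ∃ G : ℂ → EuclideanSpace ℂ (Fin n),
      ContinuousOn G (closedBall 0 1) ∧ DifferentiableOn ℂ G (ball 0 1) ∧
      ∀ ζ ∈ sphere (0 : ℂ) 1, ∀ j, G ζ j = ζ * (p ζ : ℂ) * wirtinger ρ (A ζ) j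

section Helpers
open Filter Topology

/-! ### Holomorphic functions on the disc -/

/-- A Harnack-type bound with an explicit constant, from the Borel–Carathéodory inequality applied
to `-q`. -/
theorem re_le_of_re_nonneg {q : ℂ → ℂ} {c : ℂ} {R T : ℝ} (hR : 0 < R) (hT : 0 < T)
    (hq : DifferentiableOn ℂ q (ball c R)) (h0 : ∀ w ∈ ball c R, 0 ≤ (q w).re)
    (hc : (q c).re ≤ T) : ∀ w ∈ ball c (R / 2), (q w).re ≤ 5 * T := by
  intro w hw
  set f : ℂ → ℂ := fun u => -(q (c + u) - ((q c).im : ℂ) * I) with hf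
  have hmaps : MapsTo (fun u : ℂ => c + u) (ball 0 R) (ball c R) := by
    intro u hu; simpa [mem_ball, dist_eq_norm] using hu
  have hfd : DifferentiableOn ℂ f (ball 0 R) := by
    have : DifferentiableOn ℂ (fun u : ℂ => q (c + u)) (ball 0 R) :=
      hq.comp (by fun_prop) hmaps
    exact (this.sub_const _).neg
  have hwn : ‖w - c‖ < R / 2 := by simpa [mem_ball, dist_eq_norm] using hw
  have hz : w - c ∈ ball (0 : ℂ) R := by
    rw [mem_ball_zero_iff]; linarith
  have h1 : MapsTo f (ball 0 R) {z | z.re ≤ T} := by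
    intro u hu
    have := h0 _ (hmaps hu)
    simp only [hf, mem_ofPred_eq, neg_re, sub_re, mul_re, ofReal_re, I_re, ofReal_im, I_im]
    simp only [] at this
    linarith
  have hBC := borelCaratheodory hT hfd h1 hR hz
  have hf0 : ‖f 0‖ ≤ T := by
    have : f 0 = (-((q c).re) : ℝ) := by
      apply Complex.ext <;> simp [hf]
    rw [this, Complex.norm_real, Real.norm_eq_abs, abs_neg, abs_of_nonneg (h0 c (mem_ball_self hR))]
    exact hc
  have hd : 0 < R - ‖w - c‖ := by linarith
  have h2 : 2 * T * ‖w - c‖ / (R - ‖w - c‖) ≤ 2 * T := by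
    rw [div_le_iff₀ hd]; nlinarith
  have h3 : ‖f 0‖ * (R + ‖w - c‖) / (R - ‖w - c‖) ≤ 3 * T := by
    rw [div_le_iff₀ hd]
    have : ‖f 0‖ * (R + ‖w - c‖) ≤ T * (R + ‖w - c‖) := by gcongr
    nlinarith [norm_nonneg (w - c)]
  have h4 : (q w).re = -(f (w - c)).re := by simp [hf]
  have h5 := neg_le_abs (f (w - c)).re
  have h6 := abs_re_le_norm (f (w - c))
  linarith

/-- The derivative of a holomorphic function is controlled by its real part. -/
theorem norm_deriv_le_of_re_bound {f : ℂ → ℂ} {c : ℂ} {R m a : ℝ} (hR : 0 < R) (hm : 0 < m)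
    (hf : DifferentiableOn ℂ f (ball c R)) (hb : ∀ w ∈ ball c R, |(f w).re - a| ≤ m) :
    ‖deriv f c‖ ≤ 16 * m / R := by
  set g : ℂ → ℂ := fun u => f (c + u) - f c with hg
  have hmaps : MapsTo (fun u : ℂ => c + u) (ball 0 R) (ball c R) := by
    intro u hu; simpa [mem_ball, dist_eq_norm] using hu
  have hgd : DifferentiableOn ℂ g (ball 0 R) :=
    (hf.comp (by fun_prop) hmaps).sub_const _
  have h1 : MapsTo g (ball 0 R) {z | z.re ≤ 2 * m} := by
    intro u hu
    have h1 := abs_le.1 (hb _ (hmaps hu))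
    have h2 := abs_le.1 (hb _ (mem_ball_self hR))
    simp only [hg, mem_ofPred_eq, sub_re]
    linarith [h1.2, h2.1]
  have h3 : ∀ u ∈ sphere (0 : ℂ) (R / 2), ‖g u‖ ≤ 4 * m := by
    intro u hu
    have hu' : ‖u‖ = R / 2 := by simpa using hu
    have := borelCaratheodory_zero (by positivity) hgd h1 hR
      (z := u) (by rw [mem_ball_zero_iff]; linarith) (by simp [hg])
    rw [hu'] at this
    refine this.trans (le_of_eq ?_)
    field_simp
    ring
  have h4 : DiffContOnCl ℂ g (ball 0 (R / 2)) := by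
    refine (hgd.mono ?_).diffContOnCl
    exact closure_ball_subset_closedBall.trans (closedBall_subset_ball (by linarith))
  have h5 := Complex.norm_deriv_le_of_forall_mem_sphere_norm_le (by positivity : 0 < R / 2) h4 h3
  have h6 : deriv g 0 = deriv f c := by
    simp only [hg, deriv_sub_const]
    rw [deriv_comp_const_add]; simp
  rw [h6] at h5
  refine h5.trans ?_
  rw [div_le_div_iff₀ (by positivity) hR]
  nlinarith [mul_pos hm hR]

/-! ### The Hardy–Littlewood theorem -/

/-- The derivative bound integrated along the radius from `(1 - t) x` to `x`. -/
theorem hl_radial {F : Type*} [NormedAddCommGroup F] [NormedSpace ℂ F]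
    {f : ℂ → F} {C γ : ℝ} (hC : 0 ≤ C) (hγ : 0 < γ) (hγ1 : γ ≤ 1)
    (hf : DifferentiableOn ℂ f (ball 0 1))
    (hd : ∀ ζ ∈ ball (0 : ℂ) 1, ‖deriv f ζ‖ ≤ C * (1 - ‖ζ‖) ^ (γ - 1))
    {x : ℂ} (hx : x ∈ ball (0 : ℂ) 1) {t : ℝ} (ht0 : 0 ≤ t) (ht1 : t ≤ 1) :
    ‖f x - f (((1 - t : ℝ) : ℂ) * x)‖ ≤ C / γ * t ^ γ := by
  have hx1 : ‖x‖ < 1 := by simpa using hx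
  have hx0 := norm_nonneg x
  set φ : ℝ → F := fun u => f (((1 - t + u : ℝ) : ℂ) * x) - f (((1 - t : ℝ) : ℂ) * x) with hφ
  set B : ℝ → ℝ := fun u => C / γ * ((1 - (1 - t) * ‖x‖) ^ γ - (1 - (1 - t + u) * ‖x‖) ^ γ) with hB
  have hnorm : ∀ u ∈ Icc (0 : ℝ) t, ‖((1 - t + u : ℝ) : ℂ) * x‖ = (1 - t + u) * ‖x‖ := by
    intro u hu
    rw [norm_mul, Complex.norm_real, Real.norm_eq_abs, abs_of_nonneg (by linarith [hu.1])]
  have hlt : ∀ u ∈ Icc (0 : ℝ) t, (1 - t + u) * ‖x‖ < 1 := by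
    intro u hu
    have : (1 - t + u) * ‖x‖ ≤ 1 * ‖x‖ := by gcongr; linarith [hu.2]
    linarith
  have hφd : ∀ u ∈ Icc (0 : ℝ) t,
      HasDerivAt φ (x • deriv f (((1 - t + u : ℝ) : ℂ) * x)) u := by
    intro u hu
    have h1 : HasDerivAt f (deriv f (((1 - t + u : ℝ) : ℂ) * x)) (((1 - t + u : ℝ) : ℂ) * x) := by
      refine (hf.differentiableAt (isOpen_ball.mem_nhds ?_)).hasDerivAt
      rw [mem_ball_zero_iff, hnorm u hu]; exact hlt u hu
    have h2 : HasDerivAt (fun u : ℝ => ((1 - t + u : ℝ) : ℂ) * x) x u := by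
      have := (((hasDerivAt_id u).const_add (1 - t)).ofReal_comp).mul_const x
      simpa using this
    exact (HasDerivAt.scomp u h1 h2).sub_const _
  have hBd : ∀ u ∈ Icc (0 : ℝ) t,
      HasDerivAt B (C * (1 - (1 - t + u) * ‖x‖) ^ (γ - 1) * ‖x‖) u := by
    intro u hu
    have h1 : HasDerivAt (fun u : ℝ => 1 - (1 - t + u) * ‖x‖) (-‖x‖) u := by
      have := (((hasDerivAt_id u).const_add (1 - t)).mul_const ‖x‖).const_sub 1
      simpa using this
    have h2 := h1.rpow_const (p := γ) (Or.inl (by linarith [hlt u hu]))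
    have h3 := (h2.const_sub ((1 - (1 - t) * ‖x‖) ^ γ)).const_mul (C / γ)
    refine h3.congr_deriv ?_
    field_simp
  have key := image_norm_le_of_norm_deriv_right_le_deriv_boundary' (f := φ)
    (f' := fun u => x • deriv f (((1 - t + u : ℝ) : ℂ) * x)) (a := 0) (b := t)
    (fun u hu => (hφd u hu).continuousAt.continuousWithinAt)
    (fun u hu => (hφd u ⟨hu.1, hu.2.le⟩).hasDerivWithinAt) (B := B)
    (B' := fun u => C * (1 - (1 - t + u) * ‖x‖) ^ (γ - 1) * ‖x‖)
    (by simp [hφ, hB])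
    (fun u hu => (hBd u hu).continuousAt.continuousWithinAt)
    (fun u hu => (hBd u ⟨hu.1, hu.2.le⟩).hasDerivWithinAt)
    (by
      intro u hu
      have hu' : u ∈ Icc 0 t := ⟨hu.1, hu.2.le⟩
      rw [norm_smul, mul_comm ‖x‖]
      have := hd (((1 - t + u : ℝ) : ℂ) * x)
        (by rw [mem_ball_zero_iff, hnorm u hu']; exact hlt u hu')
      rw [hnorm u hu'] at this
      gcongr)
    (right_mem_Icc.2 ht0)
  have e1 : φ t = f x - f (((1 - t : ℝ) : ℂ) * x) := by simp [hφ]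
  rw [e1] at key
  refine key.trans ?_
  have h4 : (1 - (1 - t) * ‖x‖) ^ γ ≤ (1 - (1 - t + t) * ‖x‖) ^ γ + (t * ‖x‖) ^ γ := by
    have := Real.rpow_add_le_add_rpow (p := γ) (a := 1 - (1 - t + t) * ‖x‖) (b := t * ‖x‖)
      (by linarith) (by positivity) hγ.le hγ1
    refine le_trans (le_of_eq ?_) this
    congr 1; ring
  have h5 : (t * ‖x‖) ^ γ ≤ t ^ γ := by
    apply Real.rpow_le_rpow (by positivity) _ hγ.le
    nlinarith
  simp only [hB]
  gcongr
  linarith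

/-- Hardy–Littlewood: derivative growth `C (1 - |ζ|) ^ (γ - 1)` gives a `γ`-Hölder extension to the
closed disc. Two points `x` and `y` are joined by contracting both by `1 - min ‖x - y‖ 1` and then
along a chord. -/
theorem hardy_littlewood {F : Type*} [NormedAddCommGroup F] [NormedSpace ℂ F] [CompleteSpace F]
    {f : ℂ → F} {C γ : ℝ} (hC : 0 ≤ C) (hγ : 0 < γ) (hγ1 : γ ≤ 1)
    (hf : DifferentiableOn ℂ f (ball 0 1))
    (hd : ∀ ζ ∈ ball (0 : ℂ) 1, ‖deriv f ζ‖ ≤ C * (1 - ‖ζ‖) ^ (γ - 1)) :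
    ∃ g : ℂ → F, ContinuousOn g (closedBall 0 1) ∧ EqOn g f (ball 0 1) ∧
      ∃ C', 0 ≤ C' ∧ ∀ x ∈ closedBall (0 : ℂ) 1, ∀ y ∈ closedBall (0 : ℂ) 1,
        ‖g x - g y‖ ≤ C' * ‖x - y‖ ^ γ := by
  set C' := 2 * (C / γ) + 2 * C with hC'
  have hC'0 : 0 ≤ C' := by positivity
  have hest : ∀ x ∈ ball (0 : ℂ) 1, ∀ y ∈ ball (0 : ℂ) 1, ‖f x - f y‖ ≤ C' * ‖x - y‖ ^ γ := by
    intro x hx y hy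
    by_cases hxy : x = y
    · subst hxy; simp; positivity
    have hpos : 0 < ‖x - y‖ := norm_pos_iff.2 (sub_ne_zero.2 hxy)
    have hx1 : ‖x‖ < 1 := by simpa using hx
    have hy1 : ‖y‖ < 1 := by simpa using hy
    set t := min ‖x - y‖ 1 with ht
    have ht0 : 0 < t := lt_min hpos one_pos
    have ht1 : t ≤ 1 := min_le_right _ _
    have htle : t ≤ ‖x - y‖ := min_le_left _ _
    have h2t : ‖x - y‖ ≤ 2 * t := by
      have := norm_sub_le x y
      rcases min_choice ‖x - y‖ 1 with h | h
      · rw [ht, h]; linarith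
      · rw [ht, h]; linarith
    have r1 := hl_radial hC hγ hγ1 hf hd hx ht0.le ht1
    have r2 := hl_radial hC hγ hγ1 hf hd hy ht0.le ht1
    have hsub : closedBall (0 : ℂ) (1 - t) ⊆ ball 0 1 := closedBall_subset_ball (by linarith)
    have hmem : ∀ w : ℂ, ‖w‖ < 1 → ((1 - t : ℝ) : ℂ) * w ∈ closedBall (0 : ℂ) (1 - t) := by
      intro w hw
      rw [mem_closedBall_zero_iff, norm_mul, Complex.norm_real, Real.norm_eq_abs,
        abs_of_nonneg (by linarith)]
      nlinarith
    have r3 := (convex_closedBall (0 : ℂ) (1 - t)).norm_image_sub_le_of_norm_deriv_le (f := f)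
      (C := C * t ^ (γ - 1))
      (fun w hw => hf.differentiableAt (isOpen_ball.mem_nhds (hsub hw)))
      (by
        intro w hw
        refine (hd w (hsub hw)).trans ?_
        gcongr ?_ * ?_
        have : ‖w‖ ≤ 1 - t := by simpa using hw
        exact Real.rpow_le_rpow_of_nonpos ht0 (by linarith) (by linarith))
      (hmem y hy1) (hmem x hx1)
    have e : ‖((1 - t : ℝ) : ℂ) * x - ((1 - t : ℝ) : ℂ) * y‖ ≤ 2 * t := by
      rw [← mul_sub, norm_mul, Complex.norm_real, Real.norm_eq_abs, abs_of_nonneg (by linarith)]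
      nlinarith
    have r4 : ‖f (((1 - t : ℝ) : ℂ) * x) - f (((1 - t : ℝ) : ℂ) * y)‖ ≤ 2 * C * t ^ γ := by
      refine r3.trans ?_
      have : t ^ γ = t ^ (γ - 1) * t := by
        rw [Real.rpow_sub_one ht0.ne']; field_simp
      rw [this]
      have h0 : 0 ≤ C * t ^ (γ - 1) := by positivity
      nlinarith
    have htot : ‖f x - f y‖ ≤ C' * t ^ γ := by
      have : f x - f y = (f x - f (((1 - t : ℝ) : ℂ) * x)) +
        (f (((1 - t : ℝ) : ℂ) * x) - f (((1 - t : ℝ) : ℂ) * y)) -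
        (f y - f (((1 - t : ℝ) : ℂ) * y)) := by abel
      rw [this]
      refine (norm_sub_le _ _).trans ?_
      have := norm_add_le (f x - f (((1 - t : ℝ) : ℂ) * x))
        (f (((1 - t : ℝ) : ℂ) * x) - f (((1 - t : ℝ) : ℂ) * y))
      rw [hC']; linarith
    exact htot.trans (by gcongr)
  have hcl : closure (ball (0 : ℂ) 1) = closedBall 0 1 := closure_ball 0 one_ne_zero
  have huc : UniformContinuousOn f (ball 0 1) := by
    rw [Metric.uniformContinuousOn_iff]
    intro ε hε
    have hlim : Tendsto (fun s : ℝ => C' * s ^ γ) (𝓝 0) (𝓝 0) := by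
      have : ContinuousAt (fun s : ℝ => C' * s ^ γ) 0 :=
        continuousAt_const.mul (Real.continuousAt_rpow_const 0 γ (Or.inr hγ.le))
      simpa [ContinuousAt, Real.zero_rpow hγ.ne'] using this
    obtain ⟨δ, hδ, h⟩ := Metric.eventually_nhds_iff.1 (hlim.eventually (gt_mem_nhds hε))
    refine ⟨δ, hδ, fun x hx y hy hxy => ?_⟩
    rw [dist_eq_norm]
    refine (hest x hx y hy).trans_lt (h ?_)
    rw [dist_eq_norm] at hxy
    simpa [abs_of_nonneg (norm_nonneg _)] using hxy
  have hlimit : ∀ x ∈ closedBall (0 : ℂ) 1, ∃ y, Tendsto f (𝓝[ball 0 1] x) (𝓝 y) := by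
    intro x hx
    rw [← hcl] at hx
    have hne : (𝓝[ball (0 : ℂ) 1] x).NeBot := mem_closure_iff_nhdsWithin_neBot.1 hx
    have hc : Cauchy (𝓝[ball (0 : ℂ) 1] x) := cauchy_nhds.mono inf_le_left
    have : Cauchy (map f (𝓝[ball (0 : ℂ) 1] x)) := by
      refine ⟨hne.map f, ?_⟩
      have h1 : 𝓝[ball (0 : ℂ) 1] x ×ˢ 𝓝[ball (0 : ℂ) 1] x ≤
          uniformity ℂ ⊓ 𝓟 (ball 0 1 ×ˢ ball 0 1) := by
        refine le_inf hc.2 ?_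
        rw [← prod_principal_principal]
        exact Filter.prod_mono inf_le_right inf_le_right
      rw [Filter.prod_map_map_eq]
      exact (Filter.map_mono h1).trans huc
    exact CompleteSpace.complete this
  set g := extendFrom (ball (0 : ℂ) 1) f with hg
  have hgc : ContinuousOn g (closedBall 0 1) := continuousOn_extendFrom hcl.ge hlimit
  have hgf : EqOn g f (ball 0 1) := fun x hx =>
    extendFrom_eq (subset_closure hx) (hf.continuousOn x hx)
  refine ⟨g, hgc, hgf, C', hC'0, ?_⟩
  intro x hx y hy
  have := le_on_closure (s := ball (0 : ℂ) 1 ×ˢ ball (0 : ℂ) 1)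
    (f := fun q : ℂ × ℂ => ‖g q.1 - g q.2‖) (g := fun q : ℂ × ℂ => C' * ‖q.1 - q.2‖ ^ γ)
    (fun q hq => by
      simp only [hgf hq.1, hgf hq.2]
      exact hest _ hq.1 _ hq.2)
    (by
      rw [closure_prod_eq, hcl]
      refine ContinuousOn.norm (ContinuousOn.sub ?_ ?_)
      · exact hgc.comp continuousOn_fst fun q hq => hq.1
      · exact hgc.comp continuousOn_snd fun q hq => hq.2)
    (by
      refine Continuous.continuousOn ?_
      refine continuous_const.mul (Continuous.rpow_const (by fun_prop) (fun _ => Or.inr hγ.le)))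
    (x := (x, y)) (by rw [closure_prod_eq, hcl]; exact ⟨hx, hy⟩)
  exact this

/-! ### Hölder functions on the circle -/

/-- `HolderS f`: the restriction of `f` to the unit circle is Hölder continuous of some exponent. -/
def HolderS {F : Type*} [NormedAddCommGroup F] (f : ℂ → F) : Prop :=
  ∃ γ : ℝ, 0 < γ ∧ γ ≤ 1 ∧ ∃ C : ℝ, 0 ≤ C ∧
    ∀ x ∈ sphere (0 : ℂ) 1, ∀ y ∈ sphere (0 : ℂ) 1, ‖f x - f y‖ ≤ C * ‖x - y‖ ^ γ

section HolderS
variable {F G E : Type*} [NormedAddCommGroup F] [NormedAddCommGroup G] [NormedAddCommGroup E]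

theorem norm_sub_le_two_of_sphere {x y : ℂ} (hx : x ∈ sphere (0 : ℂ) 1)
    (hy : y ∈ sphere (0 : ℂ) 1) : ‖x - y‖ ≤ 2 := by
  have h1 : ‖x‖ = 1 := by simpa using hx
  have h2 : ‖y‖ = 1 := by simpa using hy
  have := norm_sub_le x y
  linarith

theorem rpow_le_two_mul_rpow {r a b : ℝ} (hr : 0 ≤ r) (hr2 : r ≤ 2) (ha : 0 < a) (hab : a ≤ b)
    (hb : b ≤ 1) : r ^ b ≤ 2 * r ^ a := by
  have h1 : r ^ b = r ^ a * r ^ (b - a) := by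
    rcases hr.eq_or_lt with h | h
    · rw [← h, Real.zero_rpow (by linarith), Real.zero_rpow ha.ne', zero_mul]
    · rw [← Real.rpow_add h]; congr 1; ring
  have h2 : r ^ (b - a) ≤ 2 := by
    calc r ^ (b - a) ≤ 2 ^ (b - a) := Real.rpow_le_rpow hr hr2 (by linarith)
      _ ≤ 2 ^ (1 : ℝ) := Real.rpow_le_rpow_of_exponent_le (by norm_num) (by linarith)
      _ = 2 := by simp
  rw [h1, mul_comm]
  gcongr

/-- If the increments of `h` are controlled by those of `f` and `g`, then `h` is Hölder with the
smaller of the two exponents; the loss in the constant comes from `‖x - y‖ ≤ 2` on the circle. -/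
theorem HolderS.combine {f : ℂ → F} {g : ℂ → G} {h : ℂ → E} (hf : HolderS f) (hg : HolderS g)
    {L M : ℝ} (hL : 0 ≤ L) (hM : 0 ≤ M)
    (hle : ∀ x ∈ sphere (0 : ℂ) 1, ∀ y ∈ sphere (0 : ℂ) 1,
      ‖h x - h y‖ ≤ L * ‖f x - f y‖ + M * ‖g x - g y‖) : HolderS h := by
  obtain ⟨a, ha, ha1, C, hC, hfC⟩ := hf
  obtain ⟨b, hb, hb1, K, hK, hgK⟩ := hg
  refine ⟨min a b, lt_min ha hb, (min_le_left _ _).trans ha1, L * (C * 2) + M * (K * 2),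
    by positivity, fun x hx y hy => (hle x hx y hy).trans ?_⟩
  have h2 := norm_sub_le_two_of_sphere hx hy
  have e1 := rpow_le_two_mul_rpow (norm_nonneg (x - y)) h2 (lt_min ha hb) (min_le_left a b) ha1
  have e2 := rpow_le_two_mul_rpow (norm_nonneg (x - y)) h2 (lt_min ha hb) (min_le_right a b) hb1
  have f1 : L * ‖f x - f y‖ ≤ L * (C * (2 * ‖x - y‖ ^ min a b)) := by
    gcongr; exact (hfC x hx y hy).trans (by gcongr)
  have f2 : M * ‖g x - g y‖ ≤ M * (K * (2 * ‖x - y‖ ^ min a b)) := by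
    gcongr; exact (hgK x hx y hy).trans (by gcongr)
  linarith

theorem HolderS.lip {f : ℂ → F} {h : ℂ → E} (hf : HolderS f) {L : ℝ} (hL : 0 ≤ L)
    (hle : ∀ x ∈ sphere (0 : ℂ) 1, ∀ y ∈ sphere (0 : ℂ) 1,
      ‖h x - h y‖ ≤ L * ‖f x - f y‖) : HolderS h :=
  hf.combine hf hL le_rfl (by simpa using hle)

theorem holderS_const (c : F) : HolderS (fun _ => c) :=
  ⟨1, one_pos, le_rfl, 0, le_rfl, by simp⟩

theorem holderS_id : HolderS (fun ζ : ℂ => ζ) :=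
  ⟨1, one_pos, le_rfl, 1, zero_le_one, by simp⟩

theorem HolderS.add {f g : ℂ → F} (hf : HolderS f) (hg : HolderS g) :
    HolderS (fun ζ => f ζ + g ζ) :=
  hf.combine hg zero_le_one zero_le_one fun x _ y _ => by
    rw [one_mul, one_mul, add_sub_add_comm]; exact norm_add_le _ _

theorem HolderS.sub {f g : ℂ → F} (hf : HolderS f) (hg : HolderS g) :
    HolderS (fun ζ => f ζ - g ζ) :=
  hf.combine hg zero_le_one zero_le_one fun x _ y _ => by
    rw [one_mul, one_mul, sub_sub_sub_comm]; exact norm_sub_le _ _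

theorem HolderS.continuousOn {f : ℂ → F} (hf : HolderS f) : ContinuousOn f (sphere 0 1) := by
  obtain ⟨a, ha, ha1, C, hC, h⟩ := hf
  intro x hx
  rw [ContinuousWithinAt, tendsto_iff_norm_sub_tendsto_zero]
  have hlim : Tendsto (fun y : ℂ => C * ‖y - x‖ ^ a) (𝓝[sphere 0 1] x) (𝓝 0) := by
    have : Continuous (fun y : ℂ => C * ‖y - x‖ ^ a) :=
      continuous_const.mul (Continuous.rpow_const (by fun_prop) fun _ => Or.inr ha.le)
    have := (this.tendsto x).mono_left (nhdsWithin_le_nhds (s := sphere 0 1))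
    simpa [Real.zero_rpow ha.ne'] using this
  refine squeeze_zero' (Eventually.of_forall fun _ => norm_nonneg _) ?_ hlim
  filter_upwards [self_mem_nhdsWithin] with y hy using h y hy x hx

theorem exists_bound_sphere {f : ℂ → F} (hf : ContinuousOn f (sphere 0 1)) :
    ∃ M, 0 < M ∧ ∀ x ∈ sphere (0 : ℂ) 1, ‖f x‖ ≤ M := by
  obtain ⟨M, hM⟩ := (isCompact_sphere (0 : ℂ) 1).exists_bound_of_continuousOn hf
  exact ⟨max M 1, by positivity, fun x hx => (hM x hx).trans (le_max_left _ _)⟩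

theorem HolderS.mul {f g : ℂ → ℂ} (hf : HolderS f) (hg : HolderS g) :
    HolderS (fun ζ => f ζ * g ζ) := by
  obtain ⟨M, hM, hM'⟩ := exists_bound_sphere hf.continuousOn
  obtain ⟨K, hK, hK'⟩ := exists_bound_sphere hg.continuousOn
  refine hf.combine hg hK.le hM.le fun x hx y hy => ?_
  have : f x * g x - f y * g y = (f x - f y) * g x + f y * (g x - g y) := by ring
  rw [this]
  refine (norm_add_le _ _).trans ?_
  rw [norm_mul, norm_mul, mul_comm K]
  gcongr
  · exact hK' x hx
  · exact hM' y hy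

theorem HolderS.re {f : ℂ → ℂ} (hf : HolderS f) : HolderS (fun ζ => (f ζ).re) :=
  hf.lip zero_le_one fun x _ y _ => by
    rw [one_mul, ← Complex.sub_re]; exact Complex.abs_re_le_norm _

theorem HolderS.im {f : ℂ → ℂ} (hf : HolderS f) : HolderS (fun ζ => (f ζ).im) :=
  hf.lip zero_le_one fun x _ y _ => by
    rw [one_mul, ← Complex.sub_im]; exact Complex.abs_im_le_norm _

theorem HolderS.ofReal {f : ℂ → ℝ} (hf : HolderS f) : HolderS (fun ζ => (f ζ : ℂ)) :=
  hf.lip zero_le_one fun x _ y _ => by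
    rw [one_mul, ← Complex.ofReal_sub, Complex.norm_real]

theorem HolderS.sum {ι : Type*} (s : Finset ι) {f : ι → ℂ → F} (hf : ∀ i ∈ s, HolderS (f i)) :
    HolderS (fun ζ => ∑ i ∈ s, f i ζ) := by
  classical
  induction s using Finset.induction_on with
  | empty => simpa using holderS_const (0 : F)
  | insert a s ha ih =>
    simp only [Finset.sum_insert ha]
    exact (hf a (by simp)).add (ih fun i hi => hf i (by simp [hi]))

theorem HolderS.cexp {f : ℂ → ℂ} (hf : HolderS f) : HolderS (fun ζ => Complex.exp (f ζ)) := by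
  obtain ⟨M, hM, hM'⟩ := exists_bound_sphere hf.continuousOn
  refine hf.lip (Real.exp_pos M).le fun x hx y hy => ?_
  refine (convex_closedBall (0 : ℂ) M).norm_image_sub_le_of_norm_deriv_le
    (fun w _ => Complex.differentiableAt_exp) (fun w hw => ?_)
    (by simpa using hM' y hy) (by simpa using hM' x hx)
  rw [Complex.deriv_exp, Complex.norm_exp]
  exact Real.exp_le_exp.2 ((Complex.re_le_norm w).trans (by simpa using hw))

theorem HolderS.clog {f : ℂ → ℂ} (hf : HolderS f) (hpos : ∀ x ∈ sphere (0 : ℂ) 1, 0 < (f x).re) :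
    HolderS (fun ζ => Complex.log (f ζ)) := by
  obtain ⟨x₀, hx₀, hmin⟩ := (isCompact_sphere (0 : ℂ) 1).exists_isMinOn
    ⟨1, by simp⟩ hf.re.continuousOn
  set m := (f x₀).re with hm
  have hm0 : 0 < m := hpos x₀ hx₀
  have hcv : Convex ℝ {w : ℂ | m ≤ w.re} := convex_halfSpace_re_ge m
  refine hf.lip (inv_pos.2 hm0).le fun x hx y hy => ?_
  have hs : ∀ w ∈ {w : ℂ | m ≤ w.re}, w ∈ slitPlane := fun w hw => Or.inl (hm0.trans_le hw)
  refine hcv.norm_image_sub_le_of_norm_deriv_le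
    (fun w hw => Complex.differentiableAt_log (hs w hw)) (fun w hw => ?_)
    (hmin hy) (hmin hx)
  rw [(Complex.hasDerivAt_log (hs w hw)).deriv, norm_inv]
  have : m ≤ w.re := hw
  exact inv_anti₀ hm0 (this.trans (Complex.re_le_norm w))

end HolderS

/-! ### Privalov theorem on conjugate functions -/

theorem circleIntegrable_of_sphere {F : Type*} [NormedAddCommGroup F] {f : ℂ → F}
    (hf : ContinuousOn f (sphere 0 1)) : CircleIntegrable f 0 1 :=
  hf.circleIntegrable zero_le_one

theorem circleAverage_re {g : ℂ → ℂ} (hg : ContinuousOn g (sphere 0 1)) :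
    Real.circleAverage (fun ζ => (g ζ).re) 0 1 = (Real.circleAverage g 0 1).re :=
  Complex.reCLM.circleAverage_comp_comm (circleIntegrable_of_sphere hg)

theorem poisson_re {g : ℂ → ℂ} (hg : DiffContOnCl ℂ g (ball 0 1)) {w : ℂ}
    (hw : w ∈ ball (0 : ℂ) 1) :
    Real.circleAverage (fun ζ => poissonKernel 0 w ζ * (g ζ).re) 0 1 = (g w).re := by
  rw [← hg.circleAverage_poissonKernel_smul hw, poissonKernel_eq_re_herglotzRieszKernel,
    ← circleAverage_re]
  · congr 1; ext ζ; simp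
  · have h1 := continuousOn_herglotzRieszKernel_sphere hw
    rw [abs_one] at h1
    have h2 : ContinuousOn g (sphere 0 1) :=
      hg.continuousOn.mono (by rw [closure_ball 0 one_ne_zero]; exact sphere_subset_closedBall)
    exact (Complex.continuous_re.comp_continuousOn h1).smul h2

theorem poissonKernel_nonneg_sphere {w ζ : ℂ} (hw : w ∈ ball (0 : ℂ) 1)
    (hζ : ζ ∈ sphere (0 : ℂ) 1) : 0 ≤ poissonKernel 0 w ζ := by
  have h1 : ‖w‖ < 1 := by simpa using hw
  have h2 : ‖ζ‖ = 1 := by simpa using hζ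
  rw [poissonKernel_def]
  apply div_nonneg _ (by positivity)
  rw [sub_zero, sub_zero, h2]
  nlinarith [norm_nonneg w]

theorem continuousOn_poissonKernel {w : ℂ} (hw : w ∈ ball (0 : ℂ) 1) :
    ContinuousOn (poissonKernel 0 w) (sphere 0 1) := by
  have h := continuousOn_herglotzRieszKernel_sphere hw
  rw [abs_one] at h
  rw [poissonKernel_eq_re_herglotzRieszKernel]
  exact Complex.continuous_re.comp_continuousOn h

/-- A quadratic majorant of `r ^ γ`. On the circle `‖ζ - u‖ ^ 2` is the real part of an affine
function of `ζ`, so its Poisson integral is explicit. -/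
theorem holder_young {r e γ : ℝ} (hr : 0 ≤ r) (he : 0 < e) (hγ : 0 < γ) (hγ1 : γ ≤ 1) :
    r ^ γ ≤ e ^ γ + e ^ (γ - 2) * r ^ 2 := by
  rcases le_total r e with h | h
  · have := Real.rpow_le_rpow hr h hγ.le
    have : 0 ≤ e ^ (γ - 2) * r ^ 2 := by positivity
    linarith
  · have hr' : 0 < r := he.trans_le h
    have h1 : r ^ γ = r ^ (γ - 2) * r ^ 2 := by
      rw [← Real.rpow_natCast r 2, ← Real.rpow_add hr']; congr 1; push_cast; ring
    have h2 : r ^ (γ - 2) ≤ e ^ (γ - 2) :=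
      Real.rpow_le_rpow_of_nonpos he h (by linarith)
    have : 0 ≤ e ^ γ := by positivity
    rw [h1]
    have : r ^ (γ - 2) * r ^ 2 ≤ e ^ (γ - 2) * r ^ 2 := by gcongr
    linarith

/-- One-sided boundary estimate for the Poisson integral of a Hölder function: majorize `f` by the
real part of an affine function using `holder_young` with `e = √(1 - ‖w‖)`. -/
theorem poisson_upper {f : ℂ → ℝ} {γ C : ℝ} (hγ : 0 < γ) (hγ1 : γ ≤ 1) (hC : 0 ≤ C)
    (hfc : ContinuousOn f (sphere 0 1))
    (hf : ∀ x ∈ sphere (0 : ℂ) 1, ∀ y ∈ sphere (0 : ℂ) 1, f x - f y ≤ C * ‖x - y‖ ^ γ)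
    {w u : ℂ} (hw : w ∈ ball (0 : ℂ) 1) (hu : u ∈ sphere (0 : ℂ) 1) (hwu : w = ‖w‖ * u) :
    Real.circleAverage (fun ζ => poissonKernel 0 w ζ * f ζ) 0 1
      ≤ f u + 3 * C * (1 - ‖w‖) ^ (γ / 2) := by
  have hw1 : ‖w‖ < 1 := by simpa using hw
  have hu1 : ‖u‖ = 1 := by simpa using hu
  set δ := 1 - ‖w‖ with hδ
  have hδ0 : 0 < δ := by linarith
  set e := Real.sqrt δ with he
  have he0 : 0 < e := Real.sqrt_pos.2 hδ0
  have hee : e ^ 2 = δ := Real.sq_sqrt hδ0.le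
  set K := C * e ^ (γ - 2) with hK
  set g : ℂ → ℂ := fun ζ => ((f u + C * e ^ γ + 2 * K : ℝ) : ℂ) - (2 * K : ℝ) * (ζ * star u) with hg
  have hgd : Differentiable ℂ g := by
    simp only [hg]; fun_prop
  have huu : u * star u = 1 := by
    rw [Complex.star_def, Complex.mul_conj, Complex.normSq_eq_norm_sq, hu1]; simp
  have hnorm : ∀ ζ ∈ sphere (0 : ℂ) 1, ‖ζ - u‖ ^ 2 = 2 - 2 * (ζ * star u).re := by
    intro ζ hζ
    have h2 : ‖ζ‖ = 1 := by simpa using hζ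
    rw [← Complex.normSq_eq_norm_sq, Complex.normSq_sub, Complex.normSq_eq_norm_sq,
      Complex.normSq_eq_norm_sq, h2, hu1, Complex.star_def]
    ring
  have hgre : ∀ ζ, (g ζ).re = f u + C * e ^ γ + 2 * K - 2 * K * (ζ * star u).re := by
    intro ζ
    simp only [hg, Complex.sub_re, Complex.ofReal_re, Complex.re_ofReal_mul]
  have hle : ∀ ζ ∈ sphere (0 : ℂ) |1|, poissonKernel 0 w ζ * f ζ ≤ poissonKernel 0 w ζ * (g ζ).re := by
    intro ζ hζ
    rw [abs_one] at hζ
    have hP := poissonKernel_nonneg_sphere hw hζ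
    gcongr
    have h1 := hf ζ hζ u hu
    have h2 := holder_young (norm_nonneg (ζ - u)) he0 hγ hγ1
    rw [hnorm ζ hζ] at h2
    have h3 := mul_le_mul_of_nonneg_left h2 hC
    rw [hgre]
    simp only [hK]
    linarith
  have hcP := continuousOn_poissonKernel hw
  have hmono := Real.circleAverage_mono (c := 0) (R := 1)
    (f₁ := fun ζ => poissonKernel 0 w ζ * f ζ) (f₂ := fun ζ => poissonKernel 0 w ζ * (g ζ).re)
    (circleIntegrable_of_sphere (hcP.mul hfc))
    (circleIntegrable_of_sphere (hcP.mul
      (Complex.continuous_re.comp_continuousOn hgd.continuous.continuousOn))) hle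
  refine hmono.trans ?_
  rw [poisson_re hgd.diffContOnCl hw, hgre]
  have h5 : (w * star u).re = ‖w‖ := by
    conv_lhs => rw [hwu, mul_assoc, huu]
    simp
  rw [h5]
  have h6 : e ^ γ = δ ^ (γ / 2) := by
    rw [he, Real.sqrt_eq_rpow, ← Real.rpow_mul hδ0.le]; congr 1; ring
  have h7 : K * δ = C * e ^ γ := by
    rw [← hee, hK, mul_assoc, ← Real.rpow_natCast e 2, ← Real.rpow_add he0]; congr 2; push_cast; ring
  have h8 : K * δ = K - K * ‖w‖ := by rw [hδ]; ring
  rw [← h6]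
  linarith

/-- Privalov: a real Hölder function on the circle is the real part of a holomorphic function with
Hölder boundary values. The exponent obtained is half of the original one, which is not optimal but
sufficient here. -/
theorem privalov {f : ℂ → ℝ} (hf : HolderS f) :
    ∃ H : ℂ → ℂ, ContinuousOn H (closedBall 0 1) ∧ DifferentiableOn ℂ H (ball 0 1) ∧ HolderS H ∧
      (∀ ζ ∈ sphere (0 : ℂ) 1, (H ζ).re = f ζ) ∧ H 0 = (Real.circleAverage f 0 1 : ℝ) := by
  have hfc := hf.continuousOn
  obtain ⟨γ, hγ, hγ1, C₀, hC₀, hfC₀⟩ := hf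
  obtain ⟨C, hCpos, hC0⟩ : ∃ C : ℝ, 0 < C ∧ C₀ ≤ C := ⟨C₀ + 1, by linarith, by linarith⟩
  have hC : ∀ x ∈ sphere (0 : ℂ) 1, ∀ y ∈ sphere (0 : ℂ) 1, |f x - f y| ≤ C * ‖x - y‖ ^ γ :=
    fun x hx y hy => (hfC₀ x hx y hy).trans (by gcongr)
  set H₀ : ℂ → ℂ := fun w =>
    Real.circleAverage (fun ζ => herglotzRieszKernel 0 w ζ • (f ζ : ℂ)) 0 1 with hH₀
  have hfcC : ContinuousOn (fun ζ => (f ζ : ℂ)) (sphere 0 1) :=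
    Complex.continuous_ofReal.comp_continuousOn hfc
  have hd : DifferentiableOn ℂ H₀ (ball 0 1) :=
    differentiableOn_circleAverage_herglotzRieszKernel_smul (circleIntegrable_of_sphere hfcC)
  have hre : ∀ w ∈ ball (0 : ℂ) 1, (H₀ w).re =
      Real.circleAverage (fun ζ => poissonKernel 0 w ζ * f ζ) 0 1 := by
    intro w hw
    rw [hH₀, re_circleAverage_herglotzRieszKernel_smul (circleIntegrable_of_sphere hfc) hw,
      poissonKernel_eq_re_herglotzRieszKernel]
    rfl
  have hest : ∀ w ∈ ball (0 : ℂ) 1, ∀ u ∈ sphere (0 : ℂ) 1, w = ‖w‖ * u →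
      |(H₀ w).re - f u| ≤ 3 * C * (1 - ‖w‖) ^ (γ / 2) := by
    intro w hw u hu hwu
    rw [hre w hw, abs_le]
    have h1 := poisson_upper hγ hγ1 hCpos.le hfc
      (fun x hx y hy => (le_abs_self _).trans (hC x hx y hy)) hw hu hwu
    have h2 := poisson_upper (f := fun ζ => - f ζ) hγ hγ1 hCpos.le hfc.neg
      (fun x hx y hy => by
        have := (neg_le_abs _).trans (hC x hx y hy); linarith) hw hu hwu
    have h3 : Real.circleAverage (fun ζ => poissonKernel 0 w ζ * -f ζ) 0 1 =
        - Real.circleAverage (fun ζ => poissonKernel 0 w ζ * f ζ) 0 1 := by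
      rw [← neg_one_smul ℝ, ← Real.circleAverage_fun_smul]
      congr 1; ext ζ; simp
    rw [h3] at h2
    constructor <;> linarith
  have hdir : ∀ w : ℂ, ∃ u ∈ sphere (0 : ℂ) 1, w = ‖w‖ * u := by
    intro w
    by_cases h : w = 0
    · exact ⟨1, by simp, by simp [h]⟩
    · refine ⟨w / ‖w‖, ?_, ?_⟩
      · simp [h]
      · field_simp [norm_ne_zero_iff.2 h]
  -- derivative estimate on the disc of radius half the distance to the circle
  have hder : ∀ w ∈ ball (0 : ℂ) 1, ‖deriv H₀ w‖ ≤ (512 * C) * (1 - ‖w‖) ^ (γ / 2 - 1) := by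
    intro w hw
    have hw1 : ‖w‖ < 1 := by simpa using hw
    obtain ⟨u, hu, hwu⟩ := hdir w
    set δ := 1 - ‖w‖ with hδ
    have hδ0 : 0 < δ := by linarith
    have hu1 : ‖u‖ = 1 := by simpa using hu
    have hsub : ball w (δ / 2) ⊆ ball 0 1 := by
      intro x hx
      rw [mem_ball_zero_iff]
      have : ‖x - w‖ < δ / 2 := by simpa [dist_eq_norm] using hx
      have := norm_le_norm_add_norm_sub' x w
      linarith
    have hpd : 0 < δ ^ (γ / 2) := Real.rpow_pos_of_pos hδ0 _
    have hb : ∀ x ∈ ball w (δ / 2), |(H₀ x).re - f u| ≤ 16 * C * δ ^ (γ / 2) := by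
      intro x hx
      obtain ⟨y, hy, hxy⟩ := hdir x
      have hy1 : ‖y‖ = 1 := by simpa using hy
      have hxw : ‖x - w‖ < δ / 2 := by simpa [dist_eq_norm] using hx
      have h1 := hest x (hsub hx) y hy hxy
      have hxn : 1 - ‖x‖ ≤ 2 * δ := by
        have := norm_le_norm_add_norm_sub x w
        linarith
      have hxn0 : 0 ≤ 1 - ‖x‖ := by
        have : ‖x‖ < 1 := by simpa using hsub hx
        linarith
      have hsq : (1 - ‖x‖) ^ (γ / 2) ≤ 2 * δ ^ (γ / 2) := by
        calc (1 - ‖x‖) ^ (γ / 2) ≤ (2 * δ) ^ (γ / 2) :=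
              Real.rpow_le_rpow hxn0 hxn (by linarith)
          _ = 2 ^ (γ / 2) * δ ^ (γ / 2) := Real.mul_rpow (by norm_num) hδ0.le
          _ ≤ 2 ^ (1 : ℝ) * δ ^ (γ / 2) := by
            gcongr
            · norm_num
            · linarith
          _ = 2 * δ ^ (γ / 2) := by simp
      have hyu : ‖y - u‖ ≤ 4 * δ := by
        have e : y - u = (x - w) + (1 - ‖x‖ : ℝ) • y - (1 - ‖w‖ : ℝ) • u := by
          conv_rhs => rw [show x - w = (‖x‖ : ℂ) * y - ‖w‖ * u by rw [← hxy, ← hwu]]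
          simp only [Complex.real_smul]; push_cast; ring
        rw [e]
        refine (norm_sub_le _ _).trans ?_
        have := norm_add_le (x - w) ((1 - ‖x‖ : ℝ) • y)
        rw [norm_smul, hy1, mul_one, Real.norm_eq_abs, abs_of_nonneg hxn0] at this
        rw [norm_smul, hu1, mul_one, Real.norm_eq_abs, abs_of_nonneg hδ0.le]
        linarith
      have hfyu : |f y - f u| ≤ 10 * C * δ ^ (γ / 2) := by
        refine (hC y hy u hu).trans ?_
        have h2 := norm_sub_le_two_of_sphere hy hu
        have h3 := rpow_le_two_mul_rpow (norm_nonneg (y - u)) h2 (by linarith : 0 < γ / 2)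
          (by linarith : γ / 2 ≤ γ) hγ1
        have h4 : ‖y - u‖ ^ (γ / 2) ≤ 4 * δ ^ (γ / 2) := by
          calc ‖y - u‖ ^ (γ / 2) ≤ (4 * δ) ^ (γ / 2) :=
                Real.rpow_le_rpow (norm_nonneg _) hyu (by linarith)
            _ = 4 ^ (γ / 2) * δ ^ (γ / 2) := Real.mul_rpow (by norm_num) hδ0.le
            _ ≤ 4 ^ (1 : ℝ) * δ ^ (γ / 2) := by
              gcongr
              · norm_num
              · linarith
            _ = 4 * δ ^ (γ / 2) := by simp
        have : C * ‖y - u‖ ^ γ ≤ C * (2 * (4 * δ ^ (γ / 2))) := by gcongr; linarith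
        nlinarith
      have : |(H₀ x).re - f u| ≤ |(H₀ x).re - f y| + |f y - f u| := abs_sub_le _ _ _
      have : 3 * C * (1 - ‖x‖) ^ (γ / 2) ≤ 3 * C * (2 * δ ^ (γ / 2)) := by gcongr
      linarith
    have := norm_deriv_le_of_re_bound (by positivity : 0 < δ / 2)
      (by positivity : 0 < 16 * C * δ ^ (γ / 2)) (hd.mono hsub) hb
    refine this.trans (le_of_eq ?_)
    rw [Real.rpow_sub_one hδ0.ne']
    field_simp
    ring
  obtain ⟨H, hHc, hHeq, C', hC', hHC'⟩ := hardy_littlewood (by positivity : 0 ≤ 512 * C)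
    (by linarith : 0 < γ / 2) (by linarith) hd hder
  refine ⟨H, hHc, hd.congr hHeq,
    ⟨γ / 2, by linarith, by linarith, C', hC', fun x hx y hy =>
      hHC' x (sphere_subset_closedBall hx) y (sphere_subset_closedBall hy)⟩, ?_, ?_⟩
  · intro u hu
    have hu1 : ‖u‖ = 1 := by simpa using hu
    have hmap : ∀ r ∈ Ico (0 : ℝ) 1, (r : ℂ) * u ∈ ball (0 : ℂ) 1 := by
      intro r hr
      rw [mem_ball_zero_iff, norm_mul, Complex.norm_real, hu1, mul_one, Real.norm_eq_abs,
        abs_of_nonneg hr.1]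
      exact hr.2
    have ht : Tendsto (fun r : ℝ => (r : ℂ) * u) (𝓝[<] 1) (𝓝[closedBall 0 1] u) := by
      rw [tendsto_nhdsWithin_iff]
      constructor
      · have : Continuous (fun r : ℝ => (r : ℂ) * u) := by fun_prop
        have := (this.tendsto 1).mono_left (nhdsWithin_le_nhds (s := Iio 1))
        simpa using this
      · filter_upwards [Ioo_mem_nhdsLT (zero_lt_one' ℝ)] with r hr
        exact ball_subset_closedBall (hmap r ⟨hr.1.le, hr.2⟩)
    have h1 : Tendsto (fun r : ℝ => (H ((r : ℂ) * u)).re) (𝓝[<] 1) (𝓝 (H u).re) :=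
      (Complex.continuous_re.tendsto _).comp
        ((hHc u (sphere_subset_closedBall hu)).tendsto.comp ht)
    have h2 : Tendsto (fun r : ℝ => (H ((r : ℂ) * u)).re) (𝓝[<] 1) (𝓝 (f u)) := by
      rw [tendsto_iff_norm_sub_tendsto_zero]
      have hl : Tendsto (fun r : ℝ => 3 * C * (1 - r) ^ (γ / 2)) (𝓝[<] 1) (𝓝 0) := by
        have : Continuous (fun r : ℝ => 3 * C * (1 - r) ^ (γ / 2)) :=
          continuous_const.mul (Continuous.rpow_const (by fun_prop) fun _ => Or.inr (by linarith))
        have := (this.tendsto 1).mono_left (nhdsWithin_le_nhds (s := Iio 1))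
        simpa [Real.zero_rpow (by linarith : γ / 2 ≠ 0)] using this
      refine squeeze_zero' (Eventually.of_forall fun _ => norm_nonneg _) ?_ hl
      filter_upwards [Ioo_mem_nhdsLT (zero_lt_one' ℝ)] with r hr
      have hn : ‖(r : ℂ) * u‖ = r := by
        rw [norm_mul, Complex.norm_real, hu1, mul_one, Real.norm_eq_abs, abs_of_nonneg hr.1.le]
      have h3 := hest _ (hmap r ⟨hr.1.le, hr.2⟩) u hu (by rw [hn])
      rw [hn] at h3
      rw [hHeq (hmap r ⟨hr.1.le, hr.2⟩)]
      exact h3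
    exact tendsto_nhds_unique h1 h2
  · rw [hHeq (mem_ball_self one_pos), hH₀]
    simp only []
    have : Real.circleAverage (fun ζ => herglotzRieszKernel 0 0 ζ • (f ζ : ℂ)) 0 1 =
        Real.circleAverage (fun ζ => (f ζ : ℂ)) 0 1 := by
      apply Real.circleAverage_congr_sphere
      intro ζ hζ
      have : ζ ≠ 0 := by
        rintro rfl; simp at hζ
      simp [herglotzRieszKernel_def, this]
    rw [this]
    exact Complex.ofRealCLM.circleAverage_comp_comm (circleIntegrable_of_sphere hfc)

/-! ### Extremal discs of convex sets -/

/-- Complex Euclidean space. -/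
abbrev Cn (n : ℕ) := EuclideanSpace ℂ (Fin n)

/-- The points of `K` whose closed `ε`-ball lies in `K`. -/
def inset {n : ℕ} (K : Set (Cn n)) (ε : ℝ) : Set (Cn n) := {x | ∀ e : Cn n, ‖e‖ ≤ ε → x + e ∈ K}

section Convex
variable {n : ℕ} {K : Set (Cn n)}

theorem inset_closed (hK : IsClosed K) (ε : ℝ) : IsClosed (inset K ε) := by
  have : inset K ε = ⋂ e : Cn n, ⋂ _ : ‖e‖ ≤ ε, (fun x => x + e) ⁻¹' K := by
    ext x; simp [inset]
  rw [this]
  exact isClosed_iInter fun e => isClosed_iInter fun _ => hK.preimage (by fun_prop)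

/-- Insets interpolate linearly along segments. -/
theorem inset_combo (hK : Convex ℝ K) {r d t : ℝ} (ht0 : 0 ≤ t) (ht1 : t ≤ 1)
    (hr : 0 ≤ r) (hd : 0 ≤ d) {x y : Cn n} (hx : x ∈ inset K r) (hy : y ∈ inset K d) :
    (1 - t) • x + t • y ∈ inset K ((1 - t) * r + t * d) := by
  intro e he
  set R := (1 - t) * r + t * d with hR
  have hR0 : 0 ≤ R := by
    have : 0 ≤ 1 - t := by linarith
    positivity
  rcases hR0.eq_or_lt with h0 | h0
  · have he0 : e = 0 := norm_le_zero_iff.1 (by rw [h0]; exact he)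
    have h1 := hx 0 (by simpa using hr)
    have h2 := hy 0 (by simpa using hd)
    rw [add_zero] at h1 h2
    rw [he0, add_zero]
    exact hK h1 h2 (by linarith) ht0 (by ring)
  · have hn : ∀ s : ℝ, 0 ≤ s → ‖(s / R) • e‖ ≤ s := by
      intro s hs
      rw [norm_smul, Real.norm_eq_abs, abs_of_nonneg (by positivity), div_mul_eq_mul_div,
        div_le_iff₀ h0]
      gcongr
    have h1 := hx _ (hn r hr)
    have h2 := hy _ (hn d hd)
    have h3 := hK h1 h2 (by linarith : 0 ≤ 1 - t) ht0 (by ring)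
    convert h3 using 1
    have : e = ((1 - t) * (r / R) + t * (d / R)) • e := by
      rw [show (1 - t) * (r / R) + t * (d / R) = 1 by rw [hR] at h0 ⊢; field_simp, one_smul]
    conv_lhs => rw [this]
    module

theorem inset_convex (hK : Convex ℝ K) {ε : ℝ} (hε : 0 ≤ ε) : Convex ℝ (inset K ε) := by
  intro x hx y hy a b ha hb hab
  obtain rfl : a = 1 - b := by linarith
  have := inset_combo hK hb (by linarith) hε hε hx hy
  rwa [show (1 - b) * ε + b * ε = ε by ring] at this

theorem inset_shift {r s : ℝ} {x e : Cn n} (hx : x ∈ inset K r) (he : ‖e‖ ≤ s) :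
    x + e ∈ inset K (r - s) := by
  intro e' he'
  rw [add_assoc]
  exact hx _ ((norm_add_le _ _).trans (by linarith))

theorem inset_anti {r s : ℝ} {x : Cn n} (hx : x ∈ inset K r) (h : s ≤ r) : x ∈ inset K s :=
  fun e he => hx e (he.trans h)

theorem inset_subset {r : ℝ} (hr : 0 ≤ r) {x : Cn n} (hx : x ∈ inset K r) : x ∈ K := by
  simpa using hx 0 (by simpa using hr)

theorem closedBall_subset_iff_inset {r : ℝ} {x : Cn n} : closedBall x r ⊆ K ↔ x ∈ inset K r := by
  constructor
  · intro h e he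
    exact h (by simpa [dist_eq_norm] using he)
  · intro h y hy
    have := h (y - x) (by simpa [dist_eq_norm] using hy)
    simpa using this

/-- Maximum principle for convex targets. -/
theorem convex_max_principle (hK : IsClosed K) (hKc : Convex ℝ K) {f : ℂ → Cn n} {R : ℝ}
    (hR : 0 < R) (hf : DiffContOnCl ℂ f (ball 0 R)) (hfK : ∀ ζ ∈ sphere (0 : ℂ) R, f ζ ∈ K) :
    ∀ ζ ∈ closedBall (0 : ℂ) R, f ζ ∈ K := by
  intro w hw
  by_contra hcon
  obtain ⟨L, u, h1, h2⟩ := RCLike.geometric_hahn_banach_closed_point (𝕜 := ℂ) hKc hK hcon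
  have hg : DiffContOnCl ℂ (fun ζ => Complex.exp (L (f ζ))) (ball 0 R) := by
    have : DiffContOnCl ℂ (fun ζ => L (f ζ)) (ball 0 R) :=
      L.differentiable.comp_diffContOnCl hf
    exact Complex.differentiable_exp.comp_diffContOnCl this
  have := Complex.norm_le_of_forall_mem_frontier_norm_le isBounded_ball hg (C := Real.exp u)
    (fun ζ hζ => by
      rw [frontier_ball 0 hR.ne'] at hζ
      rw [Complex.norm_exp]
      exact Real.exp_le_exp.2 (h1 _ (hfK ζ hζ)).le)
    (by rw [closure_ball 0 hR.ne']; exact hw)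
  rw [Complex.norm_exp, Real.exp_le_exp] at this
  exact absurd h2 (not_lt.2 this)

/-- The maximum principle for a map that is known to take values in `K` only near the circle and need
not extend to it. -/
theorem convex_max_annulus (hK : IsClosed K) (hKc : Convex ℝ K) {f : ℂ → Cn n} {R₀ : ℝ}
    (hR0 : R₀ < 1) (hf : DifferentiableOn ℂ f (ball 0 1))
    (hfK : ∀ ζ : ℂ, R₀ < ‖ζ‖ → ‖ζ‖ < 1 → f ζ ∈ K) : ∀ ζ ∈ ball (0 : ℂ) 1, f ζ ∈ K := by
  intro w hw
  have hw1 : ‖w‖ < 1 := by simpa using hw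
  obtain ⟨R, hR1, hR2⟩ := exists_between (max_lt (max_lt hR0 hw1) one_pos)
  have a1 : R₀ < R := (le_max_left _ _).trans_lt ((le_max_left _ _).trans_lt hR1)
  have a2 : ‖w‖ < R := (le_max_right _ _).trans_lt ((le_max_left _ _).trans_lt hR1)
  have a3 : 0 < R := (le_max_right _ _).trans_lt hR1
  refine convex_max_principle hK hKc a3 ?_ ?_ w (by simpa using a2.le)
  · refine (hf.mono ?_).diffContOnCl
    exact closure_ball_subset_closedBall.trans (closedBall_subset_ball hR2)
  · intro ζ hζ
    have : ‖ζ‖ = R := by simpa using hζ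
    exact hfK ζ (by rw [this]; exact a1) (by rw [this]; exact hR2)

theorem exists_annulus {P : ℂ → Prop} (h : ∀ ζ ∈ sphere (0 : ℂ) 1, ∀ᶠ w in 𝓝 ζ, P w) :
    ∃ R₀ < 1, ∀ w : ℂ, R₀ < ‖w‖ → ‖w‖ ≤ 1 → P w := by
  have ho : IsOpen {w : ℂ | ∀ᶠ x in 𝓝 w, P x} := isOpen_setOfPred_eventually_nhds
  obtain ⟨δ, hδ, hsub⟩ := (isCompact_sphere (0 : ℂ) 1).exists_thickening_subset_open ho h
  refine ⟨max (1 - δ) 0, max_lt (by linarith) one_pos, fun w hw hw1 => ?_⟩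
  have h1 : 1 - δ < ‖w‖ := (le_max_left _ _).trans_lt hw
  have h2 : 0 < ‖w‖ := (le_max_right _ _).trans_lt hw
  have : w ∈ thickening δ (sphere (0 : ℂ) 1) := by
    rw [mem_thickening_iff]
    refine ⟨w / ‖w‖, by simp [h2.ne'], ?_⟩
    rw [dist_eq_norm]
    have : w - w / ‖w‖ = ((‖w‖ - 1 : ℝ) : ℂ) * (w / ‖w‖) := by
      have : (‖w‖ : ℂ) ≠ 0 := by exact_mod_cast h2.ne'
      push_cast; field_simp
    rw [this, norm_mul, Complex.norm_real, norm_div, Complex.norm_real, norm_norm,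
      div_self h2.ne', mul_one, Real.norm_eq_abs, abs_of_nonpos (by linarith)]
    linarith
  exact (hsub this).self_of_nhds

/-- `A` maximizes `lam` among holomorphic maps of the disc to `K` with `A 0 = z`, `A' 0 = lam v`. -/
structure IsExtremal (K : Set (Cn n)) (z v : Cn n) (lam : ℝ) (A : ℂ → Cn n) : Prop where
  hol : DifferentiableOn ℂ A (ball 0 1)
  maps : ∀ ζ ∈ ball (0 : ℂ) 1, A ζ ∈ K
  zero : A 0 = z
  der : deriv A 0 = (lam : ℂ) • v
  pos : 0 < lam
  max : ∀ (B : ℂ → Cn n) (mu : ℝ), DifferentiableOn ℂ B (ball 0 1) →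
    (∀ ζ ∈ ball (0 : ℂ) 1, B ζ ∈ K) → B 0 = z → deriv B 0 = (mu : ℂ) • v → mu ≤ lam

theorem norm_deriv_le_of_bounded {A : ℂ → Cn n} {M : ℝ} (hA : DifferentiableOn ℂ A (ball 0 1))
    (hb : ∀ ζ ∈ ball (0 : ℂ) 1, ‖A ζ‖ ≤ M) {w : ℂ} {R : ℝ} (hR : 0 < R)
    (hw : closedBall w R ⊆ ball (0 : ℂ) 1) : ‖deriv A w‖ ≤ M / R := by
  refine Complex.norm_deriv_le_of_forall_mem_sphere_norm_le hR ?_ fun ζ hζ =>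
    hb ζ (hw (sphere_subset_closedBall hζ))
  exact (hA.mono (closure_ball_subset_closedBall.trans hw)).diffContOnCl

/-- A maximizing sequence is a normal family because `K` is bounded; the limit still maps into the
closed set `K`. -/
theorem exists_extremal (hK : IsCompact K) {z v : Cn n} (hv : v ≠ 0) {r : ℝ} (hr : 0 < r)
    (hz : z ∈ inset K r) : ∃ lam A, IsExtremal K z v lam A := by
  obtain ⟨M, hM⟩ := hK.isBounded.exists_norm_le
  have hv0 : 0 < ‖v‖ := norm_pos_iff.2 hv
  set S : Set ℝ := {lam | ∃ A : ℂ → Cn n, DifferentiableOn ℂ A (ball 0 1) ∧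
    (∀ ζ ∈ ball (0 : ℂ) 1, A ζ ∈ K) ∧ A 0 = z ∧ deriv A 0 = (lam : ℂ) • v} with hS
  have hbdd : BddAbove S := by
    refine ⟨M / (1 / 2) / ‖v‖, ?_⟩
    rintro lam ⟨A, h1, h2, h3, h4⟩
    have := norm_deriv_le_of_bounded h1 (fun ζ hζ => hM _ (h2 ζ hζ)) (w := 0) (R := 1 / 2)
      (by norm_num) (closedBall_subset_ball (by norm_num))
    rw [h4, norm_smul, Complex.norm_real, Real.norm_eq_abs] at this
    rw [le_div_iff₀ hv0]
    exact (by gcongr; exact le_abs_self _ : lam * ‖v‖ ≤ |lam| * ‖v‖).trans this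
  have hmem : r / ‖v‖ ∈ S := by
    refine ⟨fun ζ => z + (ζ * ((r / ‖v‖ : ℝ) : ℂ)) • v, ?_, ?_, by simp, ?_⟩
    · exact ((differentiable_id.mul_const _).smul_const v).const_add z |>.differentiableOn
    · intro ζ hζ
      apply hz
      have : ‖ζ‖ < 1 := by simpa using hζ
      rw [norm_smul, norm_mul, Complex.norm_real, Real.norm_eq_abs, abs_of_pos (by positivity)]
      rw [mul_assoc, div_mul_cancel₀ _ hv0.ne']
      nlinarith
    · rw [deriv_const_add, deriv_smul_const (by fun_prop)]
      simp
  obtain ⟨u, -, hu, huS⟩ := exists_seq_tendsto_sSup ⟨_, hmem⟩ hbdd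
  choose A hAd hAK hA0 hAder using huS
  set F : Filter ℕ := (hyperfilter ℕ : Filter ℕ) with hF
  have hFle : F ≤ atTop := by rw [← Nat.cofinite_eq_atTop]; exact hyperfilter_le_cofinite
  -- pointwise limits along an ultrafilter
  have hlim : ∀ ζ : ℂ, ∃ a : Cn n, ζ ∈ ball (0 : ℂ) 1 →
      a ∈ K ∧ Tendsto (fun k => A k ζ) F (𝓝 a) := by
    intro ζ
    by_cases hζ : ζ ∈ ball (0 : ℂ) 1
    · obtain ⟨a, ha, hle⟩ := hK.ultrafilter_le_nhds ((hyperfilter ℕ).map (fun k => A k ζ))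
        (by
          rw [le_principal_iff]
          exact (Filter.Eventually.of_forall fun k => hAK k ζ hζ : ∀ᶠ k in F, A k ζ ∈ K))
      exact ⟨a, fun _ => ⟨ha, hle⟩⟩
    · exact ⟨0, fun h => absurd h hζ⟩
  choose a ha using hlim
  have hequi : EquicontinuousOn A (ball 0 1) := by
    intro w hw
    have hw1 : ‖w‖ < 1 := by simpa using hw
    set δ := (1 - ‖w‖) / 2 with hδ
    have hδ0 : 0 < δ := by linarith
    have hsub : ∀ x ∈ closedBall w (δ / 2), closedBall x (δ / 2) ⊆ ball 0 1 := by
      intro x hx y hy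
      rw [mem_ball_zero_iff]
      have h1 : ‖x - w‖ ≤ δ / 2 := by simpa [dist_eq_norm] using hx
      have h2 : ‖y - x‖ ≤ δ / 2 := by simpa [dist_eq_norm] using hy
      have h3 := norm_le_norm_add_norm_sub' y x
      have h4 := norm_le_norm_add_norm_sub' x w
      linarith
    have hlip : ∀ k, ∀ x ∈ closedBall w (δ / 2),
        ‖A k x - A k w‖ ≤ (M / (δ / 2)) * ‖x - w‖ := by
      intro k x hx
      refine (convex_closedBall w (δ / 2)).norm_image_sub_le_of_norm_deriv_le (f := A k)
        (fun y hy => ?_) (fun y hy => ?_) (mem_closedBall_self (by positivity)) hx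
      · exact (hAd k).differentiableAt (isOpen_ball.mem_nhds
          (hsub y hy (mem_closedBall_self (by positivity))))
      · exact norm_deriv_le_of_bounded (hAd k) (fun ζ hζ => hM _ (hAK k ζ hζ)) (by positivity)
          (hsub y hy)
    refine EquicontinuousAt.equicontinuousWithinAt ?_ _
    rw [Metric.equicontinuousAt_iff_right]
    intro ε hε
    have hc : Tendsto (fun x => (M / (δ / 2)) * ‖x - w‖) (𝓝 w) (𝓝 0) := by
      have : Continuous fun x => (M / (δ / 2)) * ‖x - w‖ := by fun_prop
      simpa using this.tendsto w
    filter_upwards [hc.eventually (gt_mem_nhds hε), closedBall_mem_nhds w (half_pos hδ0)]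
      with x hx hxb k
    rw [dist_comm, dist_eq_norm]
    exact (hlip k x hxb).trans_lt hx
  have hloc : TendstoLocallyUniformlyOn A a F (ball 0 1) := by
    rw [tendstoLocallyUniformlyOn_iff_forall_isCompact isOpen_ball]
    intro Q hQ hQc
    have := (EquicontinuousOn.tendsto_uniformOnFun_iff_pi' (𝔖 := {Q}) (F := A)
      (by simpa using hQc) (by simpa using hequi.mono hQ) F a).2 (by
        rw [tendsto_pi_nhds]
        rintro ⟨x, hx⟩
        rw [sUnion_singleton] at hx
        exact (ha x (hQ hx)).2)
    rw [UniformOnFun.tendsto_iff_tendstoUniformlyOn] at this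
    exact this Q rfl
  have hd := hloc.differentiableOn (Eventually.of_forall hAd) isOpen_ball
  have hder := hloc.deriv (Eventually.of_forall hAd) isOpen_ball
  have h0 : (0 : ℂ) ∈ ball (0 : ℂ) 1 := mem_ball_self one_pos
  have hD0 : deriv a 0 = ((sSup S : ℝ) : ℂ) • v := by
    refine tendsto_nhds_unique (hder.tendsto_at h0) ?_
    simp only [Function.comp_def, hAder]
    exact ((Complex.continuous_ofReal.tendsto _).comp (hu.mono_left hFle)).smul_const v
  refine ⟨sSup S, a, hd, fun ζ hζ => (ha ζ hζ).1, ?_, hD0, ?_, ?_⟩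
  · refine tendsto_nhds_unique (ha 0 h0).2 ?_
    simp only [hA0]
    exact tendsto_const_nhds
  · exact (by positivity : 0 < r / ‖v‖).trans_le (le_csSup hbdd hmem)
  · intro B mu h1 h2 h3 h4
    exact le_csSup hbdd ⟨B, h1, h2, h3, h4⟩

/-- A map `h` with the same value and derivative at `0` as `A` cannot stay at distance `ε` inside `K`
near the circle: `h + ζ (ε / ‖v‖) v` would still map into `K` and have a larger derivative at `0`. -/
theorem IsExtremal.no_competitor (hK : IsClosed K) (hKc : Convex ℝ K) {z v : Cn n} (hv : v ≠ 0)
    {lam : ℝ} {A : ℂ → Cn n} (hA : IsExtremal K z v lam A) {h : ℂ → Cn n}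
    (hd : DifferentiableOn ℂ h (ball 0 1)) (h0 : h 0 = z) (hder : deriv h 0 = (lam : ℂ) • v)
    {ε R₀ : ℝ} (hε : 0 < ε) (hR : R₀ < 1)
    (hin : ∀ ζ : ℂ, R₀ < ‖ζ‖ → ‖ζ‖ < 1 → h ζ ∈ inset K ε) : False := by
  have hv0 : 0 < ‖v‖ := norm_pos_iff.2 hv
  have hd2 : Differentiable ℂ (fun ζ : ℂ => (ζ * ((ε / ‖v‖ : ℝ) : ℂ)) • v) :=
    (differentiable_id.mul_const _).smul_const v
  set B : ℂ → Cn n := fun ζ => h ζ + (ζ * ((ε / ‖v‖ : ℝ) : ℂ)) • v with hB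
  have hBd : DifferentiableOn ℂ B (ball 0 1) := hd.add hd2.differentiableOn
  have hBK := convex_max_annulus hK hKc hR hBd (fun ζ h1 h2 => by
    apply hin ζ h1 h2
    rw [norm_smul, norm_mul, Complex.norm_real, Real.norm_eq_abs, abs_of_pos (by positivity)]
    rw [mul_assoc, div_mul_cancel₀ _ hv0.ne']
    nlinarith)
  have hda : DifferentiableAt ℂ h 0 :=
    hd.differentiableAt (isOpen_ball.mem_nhds (mem_ball_self one_pos))
  have := hA.max B (lam + ε / ‖v‖) hBd hBK (by simp [hB, h0]) (by
    have : deriv B 0 = deriv h 0 + deriv (fun ζ : ℂ => (ζ * ((ε / ‖v‖ : ℝ) : ℂ)) • v) 0 :=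
      deriv_add hda (hd2 0)
    rw [this, hder, deriv_smul_const (by fun_prop)]
    simp [add_smul])
  have : 0 < ε / ‖v‖ := by positivity
  linarith

/-- A map continuous up to the circle with the same value and derivative at `0` as `A` cannot send the
circle into the open set `D`. -/
theorem IsExtremal.no_closed_competitor {D : Set (Cn n)} (hD : IsOpen D) (hDc : Convex ℝ D)
    {z v : Cn n} (hv : v ≠ 0) {lam : ℝ} {A : ℂ → Cn n} (hA : IsExtremal (closure D) z v lam A)
    {h : ℂ → Cn n} (hc : ContinuousOn h (closedBall 0 1))
    (hd : DifferentiableOn ℂ h (ball 0 1)) (h0 : h 0 = z) (hder : deriv h 0 = (lam : ℂ) • v)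
    (hin : ∀ ζ ∈ sphere (0 : ℂ) 1, h ζ ∈ D) : False := by
  have hcomp : IsCompact (h '' sphere 0 1) :=
    (isCompact_sphere (0 : ℂ) 1).image_of_continuousOn (hc.mono sphere_subset_closedBall)
  obtain ⟨δ, hδ, hsub⟩ := hcomp.exists_cthickening_subset_open hD (by
    rintro _ ⟨ζ, hζ, rfl⟩; exact hin ζ hζ)
  have hs : ∀ ζ ∈ sphere (0 : ℂ) 1, h ζ ∈ inset (closure D) δ := by
    intro ζ hζ e he
    refine subset_closure (hsub ?_)
    refine mem_cthickening_of_dist_le _ (h ζ) _ _ (mem_image_of_mem h hζ) ?_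
    simpa [dist_eq_norm] using he
  have hdc : DiffContOnCl ℂ h (ball 0 1) :=
    ⟨hd, by rw [closure_ball 0 one_ne_zero]; exact hc⟩
  have := convex_max_principle (inset_closed isClosed_closure δ)
    (inset_convex hDc.closure hδ.le) one_pos hdc hs
  exact hA.no_competitor isClosed_closure hDc.closure hv hd h0 hder hδ (R₀ := 0) one_pos
    (fun ζ _ h2 => this ζ (by simpa using h2.le))

end Convex

/-! ### Boundary distance of an extremal disc -/

section Growth
variable {n : ℕ} {K : Set (Cn n)}

/-- A disc lying strictly inside `K` cannot share with the extremal disc `A` both the centre and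
another value at the same parameter `ζ₀`. Put `m ζ = c ζ / (1 - conj ζ₀ ζ)`; on the circle
`m ζ / (ζ - ζ₀) = c / |ζ - ζ₀| ^ 2` is real and positive, so `A - m (A - B) / (ζ - ζ₀)` is there a
strict convex combination of `A` and `B`, and it has the same value and derivative at `0` as `A`
because `m` and `A - B` both vanish at `0`. -/
theorem IsExtremal.no_inner_disc (hK : IsCompact K) (hKc : Convex ℝ K) {z v : Cn n} (hv : v ≠ 0)
    {lam : ℝ} {A : ℂ → Cn n} (hA : IsExtremal K z v lam A) {B : ℂ → Cn n} {ζ₀ : ℂ}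
    (hζ : ζ₀ ∈ ball (0 : ℂ) 1) (hζ0 : ζ₀ ≠ 0) (hB : DifferentiableOn ℂ B (ball 0 1))
    {ε : ℝ} (hε : 0 < ε) (hBK : ∀ ζ ∈ ball (0 : ℂ) 1, B ζ ∈ inset K ε)
    (hB0 : B 0 = z) (hB1 : B ζ₀ = A ζ₀) : False := by
  obtain ⟨M, hMpos, hM⟩ := hK.isBounded.exists_pos_norm_le
  have hz1 : ‖ζ₀‖ < 1 := by simpa using hζ
  obtain ⟨c, hc⟩ : ∃ c : ℝ, c = (1 - ‖ζ₀‖) ^ 2 / 2 := ⟨_, rfl⟩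
  have hc0 : 0 < c := by
    rw [hc]
    have : 0 < 1 - ‖ζ₀‖ := by linarith
    positivity
  set E : ℂ → Cn n := fun ζ => A ζ - B ζ with hE
  have hEd : DifferentiableOn ℂ E (ball 0 1) := hA.hol.sub hB
  have hEb : ∀ ζ ∈ ball (0 : ℂ) 1, ‖E ζ‖ ≤ 2 * M := fun ζ h => by
    have h1 := hM _ (hA.maps ζ h)
    have h2 := hM _ (inset_subset hε.le (hBK ζ h))
    have := norm_sub_le (A ζ) (B ζ)
    simp only [hE]; linarith
  set S : ℂ → Cn n := dslope E ζ₀ with hS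
  have hSd : DifferentiableOn ℂ S (ball 0 1) :=
    (differentiableOn_dslope (isOpen_ball.mem_nhds hζ)).2 hEd
  have hden : ∀ ζ : ℂ, ‖ζ‖ ≤ 1 → 1 - star ζ₀ * ζ ≠ 0 := by
    intro ζ h habs
    have : star ζ₀ * ζ = 1 := (sub_eq_zero.1 habs).symm
    have h2 : ‖star ζ₀ * ζ‖ = 1 := by rw [this]; simp
    rw [norm_mul, norm_star] at h2
    nlinarith [norm_nonneg ζ₀, norm_nonneg ζ]
  set m : ℂ → ℂ := fun ζ => c * ζ / (1 - star ζ₀ * ζ) with hm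
  have hmd : DifferentiableOn ℂ m (ball 0 1) := by
    intro ζ h
    have h1 : ‖ζ‖ < 1 := by simpa using h
    refine DifferentiableAt.differentiableWithinAt ?_
    refine DifferentiableAt.div (by fun_prop) (by fun_prop) (hden ζ h1.le)
  set h : ℂ → Cn n := fun ζ => A ζ - m ζ • S ζ with hh
  have hhd : DifferentiableOn ℂ h (ball 0 1) := hA.hol.sub (hmd.smul hSd)
  have h0mem : (0 : ℂ) ∈ ball (0 : ℂ) 1 := mem_ball_self one_pos
  have hE0 : E 0 = 0 := by simp [hE, hA.zero, hB0]
  have hEζ : E ζ₀ = 0 := by simp [hE, hB1]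
  have hS0 : S 0 = 0 := by
    rw [hS, dslope_of_ne _ hζ0.symm, slope_def_module, hE0, hEζ]; simp
  have hh0 : h 0 = z := by simp [hh, hm, hA.zero]
  have hder : deriv h 0 = (lam : ℂ) • v := by
    have d1 := (hA.hol.differentiableAt (isOpen_ball.mem_nhds h0mem)).hasDerivAt
    have d2 := (hmd.differentiableAt (isOpen_ball.mem_nhds h0mem)).hasDerivAt
    have d3 := (hSd.differentiableAt (isOpen_ball.mem_nhds h0mem)).hasDerivAt
    have := (d1.sub (d2.smul d3)).deriv
    have e : deriv h 0 = deriv A 0 - (m 0 • deriv S 0 + deriv m 0 • S 0) := this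
    rw [e, hS0, hA.der]
    simp [hm]
  -- the convex combination parameter, real on the unit circle
  set κ : ℂ → ℂ := fun ζ => m ζ / (ζ - ζ₀) with hκ
  have hcirc : ∀ ζ ∈ sphere (0 : ℂ) 1, ζ ≠ ζ₀ ∧ κ ζ = ((c / ‖ζ - ζ₀‖ ^ 2 : ℝ) : ℂ) ∧
      c / 4 ≤ c / ‖ζ - ζ₀‖ ^ 2 ∧ c / ‖ζ - ζ₀‖ ^ 2 ≤ 1 / 2 := by
    intro ζ hs
    have h1 : ‖ζ‖ = 1 := by simpa using hs
    have hne : ζ ≠ ζ₀ := by rintro rfl; linarith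
    have hpos : 0 < ‖ζ - ζ₀‖ := norm_pos_iff.2 (sub_ne_zero.2 hne)
    have hup : ‖ζ - ζ₀‖ ≤ 2 := by
      have := norm_sub_le ζ ζ₀; linarith
    have hlo : 1 - ‖ζ₀‖ ≤ ‖ζ - ζ₀‖ := by
      have := norm_sub_norm_le ζ ζ₀; linarith
    refine ⟨hne, ?_, ?_, ?_⟩
    · have hζζ : ζ * star ζ = 1 := by
        rw [Complex.star_def, Complex.mul_conj, Complex.normSq_eq_norm_sq, h1]; simp
      have e1 : 1 - star ζ₀ * ζ = ζ * star (ζ - ζ₀) := by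
        rw [star_sub, mul_sub, hζζ]; ring
      have e2 : (ζ - ζ₀) * star (ζ - ζ₀) = ((‖ζ - ζ₀‖ ^ 2 : ℝ) : ℂ) := by
        rw [Complex.star_def, Complex.mul_conj, Complex.normSq_eq_norm_sq]
      have hζ0' : ζ ≠ 0 := by rintro rfl; simp at h1
      simp only [hκ, hm]
      rw [div_div, e1, Complex.ofReal_div, ← e2]
      rw [show ζ * star (ζ - ζ₀) * (ζ - ζ₀) = ((ζ - ζ₀) * star (ζ - ζ₀)) * ζ by ring,
        mul_div_mul_right _ _ hζ0']
    · apply div_le_div_of_nonneg_left hc0.le (by positivity)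
      nlinarith
    · rw [div_le_iff₀ (by positivity)]
      have : (1 - ‖ζ₀‖) ^ 2 ≤ ‖ζ - ζ₀‖ ^ 2 := by
        apply pow_le_pow_left₀ (by linarith) hlo
      rw [hc]; linarith
  have hnear : ∀ ζ ∈ sphere (0 : ℂ) 1, ∀ᶠ w in 𝓝 ζ, w ≠ ζ₀ ∧ c / 8 < (κ w).re ∧ (κ w).re < 1 ∧
      |(κ w).im| < c * ε / (32 * M) := by
    intro ζ hs
    have h1 : ‖ζ‖ = 1 := by simpa using hs
    obtain ⟨hne, hk, hk1, hk2⟩ := hcirc ζ hs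
    have hcont : ContinuousAt κ ζ := by
      simp only [hκ, hm]
      refine ContinuousAt.div (ContinuousAt.div (by fun_prop) (by fun_prop) (hden ζ h1.le))
        (by fun_prop) (sub_ne_zero.2 hne)
    have hre : ContinuousAt (fun w => (κ w).re) ζ := Complex.continuous_re.continuousAt.comp hcont
    have him : ContinuousAt (fun w => |(κ w).im|) ζ :=
      (Complex.continuous_im.continuousAt.comp hcont).abs
    have hre' : (κ ζ).re = c / ‖ζ - ζ₀‖ ^ 2 := by rw [hk]; simp only [Complex.ofReal_re]
    have him' : |(κ ζ).im| = 0 := by rw [hk]; simp only [Complex.ofReal_im, abs_zero]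
    have n1 : ∀ᶠ w in 𝓝 ζ, w ≠ ζ₀ := isOpen_ne.mem_nhds hne
    have n2 : ∀ᶠ w in 𝓝 ζ, c / 8 < (κ w).re :=
      hre.eventually (lt_mem_nhds (by
        show c / 8 < (κ ζ).re
        rw [hre']; linarith))
    have n3 : ∀ᶠ w in 𝓝 ζ, (κ w).re < 1 :=
      hre.eventually (gt_mem_nhds (by
        show (κ ζ).re < 1
        rw [hre']; linarith))
    have n4 : ∀ᶠ w in 𝓝 ζ, |(κ w).im| < c * ε / (32 * M) :=
      him.eventually (gt_mem_nhds (by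
        show |(κ ζ).im| < _
        rw [him']; positivity))
    exact n1.and (n2.and (n3.and n4))
  obtain ⟨R₀, hR₀, hann⟩ := exists_annulus hnear
  refine hA.no_competitor hK.isClosed hKc hv hhd hh0 hder (ε := c * ε / 16) (by positivity) hR₀ ?_
  intro ζ hζR hζ1
  obtain ⟨hne, ha, hb, hi⟩ := hann ζ hζR hζ1.le
  have hζb : ζ ∈ ball (0 : ℂ) 1 := by simpa using hζ1
  set t := (κ ζ).re with ht
  have e1 : h ζ = ((1 - t) • A ζ + t • B ζ) + (-((κ ζ).im * I : ℂ)) • E ζ := by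
    have e2 : m ζ • S ζ = κ ζ • E ζ := by
      rw [hS, dslope_of_ne _ hne, slope_def_module, hEζ, sub_zero, smul_smul]
      simp only [hκ]
      rw [div_eq_mul_inv]
    have e3 : κ ζ = (t : ℂ) + (κ ζ).im * I := (Complex.re_add_im _).symm
    have e4 : κ ζ • E ζ = t • E ζ + ((κ ζ).im * I : ℂ) • E ζ := by
      conv_lhs => rw [e3]
      rw [add_smul, Complex.coe_smul]
    simp only [hh]
    rw [e2, e4]
    simp only [hE]
    module
  have hmem : (1 - t) • A ζ + t • B ζ ∈ inset K ((1 - t) * 0 + t * ε) :=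
    inset_combo hKc (by linarith) hb.le le_rfl hε.le
      (by intro e he; rw [norm_le_zero_iff.1 he, add_zero]; exact hA.maps ζ hζb) (hBK ζ hζb)
  have herr : ‖(-((κ ζ).im * I : ℂ)) • E ζ‖ ≤ c * ε / 16 := by
    rw [norm_smul, norm_neg, norm_mul, Complex.norm_real, Complex.norm_I, mul_one]
    calc ‖(κ ζ).im‖ * ‖E ζ‖ ≤ (c * ε / (32 * M)) * (2 * M) := by
          gcongr
          · exact hi.le
          · exact hEb ζ hζb
      _ = c * ε / 16 := by field_simp; ring
  rw [e1]
  refine inset_anti (inset_shift hmem herr) ?_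
  nlinarith

theorem one_sub_re_pos {ζ : ℂ} (h : ζ ∈ ball (0 : ℂ) 1) : 0 < (1 - ζ).re := by
  have h1 : ‖ζ‖ < 1 := by simpa using h
  have := Complex.re_le_norm ζ
  simp only [Complex.sub_re, Complex.one_re]; linarith

/-- On the disc, the power `(1 - ζ) ^ β` with small `β` lies in a thin sector. -/
theorem cpow_sector {β : ℝ} (hβ0 : 0 < β) (hβ1 : β ≤ 1 / 64) {ζ : ℂ} (hζ : ζ ∈ ball (0 : ℂ) 1) :
    ∃ X Y : ℝ, Complex.exp (β * Complex.log (1 - ζ)) = (X : ℂ) + (Y : ℂ) * I ∧ 0 < X ∧ X ≤ 1 + β ∧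
      |Y| ≤ 3.2 * β * X := by
  have h1 : ‖ζ‖ < 1 := by simpa using hζ
  have hpos := one_sub_re_pos hζ
  have hne : (1 - ζ) ≠ 0 := by intro h; rw [h] at hpos; simp at hpos
  obtain ⟨φ, hφ⟩ : ∃ φ, φ = β * Complex.arg (1 - ζ) := ⟨_, rfl⟩
  obtain ⟨ℓ, hℓ⟩ : ∃ ℓ, ℓ = Real.exp (β * Real.log ‖1 - ζ‖) := ⟨_, rfl⟩
  have hℓ0 : 0 < ℓ := hℓ ▸ Real.exp_pos _
  have e0 : (β : ℂ) * Complex.log (1 - ζ) = ((β * Real.log ‖1 - ζ‖ : ℝ) : ℂ) + (φ : ℝ) * I := by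
    rw [hφ, Complex.log]; push_cast; ring
  refine ⟨ℓ * Real.cos φ, ℓ * Real.sin φ, ?_, ?_⟩
  · rw [e0, Complex.exp_add, ← Complex.ofReal_exp, ← hℓ, Complex.exp_mul_I]
    push_cast; ring
  obtain ⟨X, hX⟩ : ∃ X, X = ℓ * Real.cos φ := ⟨_, rfl⟩
  obtain ⟨Y, hY⟩ : ∃ Y, Y = ℓ * Real.sin φ := ⟨_, rfl⟩
  rw [← hX, ← hY]
  have harg : |Complex.arg (1 - ζ)| < Real.pi / 2 :=
    Complex.abs_arg_lt_pi_div_two_iff.2 (Or.inl hpos)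
  have hφb : |φ| ≤ β * 1.6 := by
    rw [hφ, abs_mul, abs_of_pos hβ0]
    have := Real.pi_lt_d2
    gcongr
    linarith
  have hcos : 1 / 2 ≤ Real.cos φ := by
    have h2 := Real.one_sub_sq_div_two_le_cos (x := φ)
    have h3 : |φ| ≤ 1 := by linarith
    have : φ ^ 2 ≤ 1 := by rw [← sq_abs]; nlinarith [abs_nonneg φ]
    linarith
  have hX0 : 0 < X := hX ▸ mul_pos hℓ0 (by linarith)
  have hYX : |Y| ≤ 3.2 * β * X := by
    rw [hY, hX, abs_mul, abs_of_pos hℓ0]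
    have h2 : |Real.sin φ| ≤ |φ| := Real.abs_sin_le_abs
    calc ℓ * |Real.sin φ| ≤ ℓ * (β * 1.6) := by gcongr; exact h2.trans hφb
      _ = 3.2 * β * (ℓ * (1 / 2)) := by ring
      _ ≤ 3.2 * β * (ℓ * Real.cos φ) := by gcongr
  have hXle : X ≤ 1 + β := by
    have hl2 : Real.log ‖1 - ζ‖ ≤ 0.7 := by
      have h2 : ‖1 - ζ‖ ≤ 2 := by
        have := norm_sub_le (1 : ℂ) ζ; simp at this; linarith
      have h3 := Real.log_le_log (norm_pos_iff.2 hne) h2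
      have := Real.log_two_lt_d9
      linarith
    have h4 : ℓ ≤ Real.exp (β * 0.7) := by
      rw [hℓ]; gcongr
    have h5 := Real.add_one_le_exp (-(β * 0.7))
    have h6 : Real.exp (β * 0.7) * Real.exp (-(β * 0.7)) = 1 := by
      rw [← Real.exp_add]; simp
    have h7 : Real.exp (β * 0.7) ≤ 1 + β := by
      have h8 := Real.exp_pos (β * 0.7)
      by_contra hcon
      push Not at hcon
      have : (1 + β) * (1 - β * 0.7) < 1 := by
        calc (1 + β) * (1 - β * 0.7) < Real.exp (β * 0.7) * (1 - β * 0.7) := by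
              apply mul_lt_mul_of_pos_right hcon; linarith
          _ ≤ Real.exp (β * 0.7) * Real.exp (-(β * 0.7)) := by gcongr; linarith
          _ = 1 := h6
      nlinarith
    have := Real.cos_le_one φ
    calc X = ℓ * Real.cos φ := hX
      _ ≤ ℓ * 1 := by gcongr
      _ ≤ 1 + β := by linarith
  exact ⟨hX0, hXle, hYX⟩

/-- An inset estimate along the line through `z` and `a`, slightly beyond both ends. -/
theorem inset_line (hKc : Convex ℝ K) {z a : Cn n} {r d M β d' t : ℝ} (hd : 0 < d) (hdr : d ≤ r)
    (hz : z ∈ inset K r) (ha : a ∈ inset K d) (haz : ‖a - z‖ ≤ M) (hM : 0 < M) (hβ0 : 0 < β)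
    (hβ1 : β ≤ 1 / 64) (hd1 : d' ≤ 1 / 4) (hd0 : 0 < d') (hβM : β * M = r / 64)
    (hdM : d' * M = d / 4) (hrM : r ≤ M) {err : Cn n} (hen : ‖err‖ ≤ (r / 20) * (1 + d' - t))
    (ht1 : t < 1 + d') (ht2 : -(5 / 4 * β) ≤ t) :
    ((1 - t) • z + t • a) + err ∈ inset K (d / 2) := by
  have hr : 0 < r := hd.trans_le hdr
  rcases le_total t 0 with h | h
  · have e2 : ((1 - t) • z + t • a) + err = z + (t • (a - z) + err) := by module
    rw [e2]
    have hn1 : ‖t • (a - z)‖ ≤ 5 / 4 * (r / 64) := by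
      rw [norm_smul, Real.norm_eq_abs, abs_of_nonpos h, ← hβM]
      calc -t * ‖a - z‖ ≤ (5 / 4 * β) * M := by gcongr; linarith
        _ = _ := by ring
    have hn2 : ‖err‖ ≤ (r / 20) * (3 / 2) := by
      refine hen.trans ?_
      gcongr
      linarith
    refine inset_anti (inset_shift hz ((norm_add_le _ _).trans (add_le_add hn1 hn2))) ?_
    linarith
  rcases le_total t 1 with h' | h'
  · refine inset_anti (inset_shift (inset_combo hKc h h' hr.le hd.le hz ha) hen) ?_
    have : r * d' ≤ d / 4 := by
      rw [← hdM, mul_comm]; gcongr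
    nlinarith
  · have e2 : ((1 - t) • z + t • a) + err = a + ((t - 1) • (a - z) + err) := by module
    rw [e2]
    have hn1 : ‖(t - 1) • (a - z)‖ ≤ d / 4 := by
      rw [norm_smul, Real.norm_eq_abs, abs_of_nonneg (by linarith), ← hdM]
      gcongr
      linarith
    have hn2 : ‖err‖ ≤ d / 80 := by
      refine hen.trans ?_
      have : r * d' ≤ d / 4 := by
        rw [← hdM, mul_comm]; gcongr
      have : r / 20 * (1 + d' - t) ≤ r / 20 * d' := by gcongr; linarith
      linarith
    refine inset_anti (inset_shift ha ((norm_add_le _ _).trans (add_le_add hn1 hn2))) ?_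
    linarith

/-- The disc `z + (1 + d / (4 M)) (1 - (1 - ζ) ^ β) (a - z)` passes through `z` and `a`. As `β` is
small, `(1 - ζ) ^ β` stays in a thin sector, so the disc stays close to a segment and at distance
`d / 2` inside `K`. -/
theorem exists_inner_disc (hKc : Convex ℝ K) {z a : Cn n} {r d M : ℝ} (hd : 0 < d) (hdr : d ≤ r)
    (hrM : r ≤ M) (hz : z ∈ inset K r) (ha : a ∈ inset K d) (haz : ‖a - z‖ ≤ M) :
    ∃ b : ℂ → Cn n, DifferentiableOn ℂ b (ball 0 1) ∧ (∀ ζ ∈ ball (0 : ℂ) 1, b ζ ∈ inset K (d / 2)) ∧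
      b 0 = z ∧ ∀ s : ℝ, s ∈ Ioo (0 : ℝ) 1 →
        (1 - s) ^ (r / (64 * M)) = (d / (4 * M)) / (1 + d / (4 * M)) → b s = a := by
  have hr : 0 < r := hd.trans_le hdr
  have hM : 0 < M := hr.trans_le hrM
  obtain ⟨β, hβ⟩ : ∃ β, β = r / (64 * M) := ⟨_, rfl⟩
  obtain ⟨d', hd'⟩ : ∃ d', d' = d / (4 * M) := ⟨_, rfl⟩
  rw [← hβ, ← hd']
  have hβ0 : 0 < β := by rw [hβ]; positivity
  have hβ1 : β ≤ 1 / 64 := by rw [hβ, div_le_iff₀ (by positivity)]; linarith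
  have hd0 : 0 < d' := by rw [hd']; positivity
  have hd1 : d' ≤ 1 / 4 := by rw [hd', div_le_iff₀ (by positivity)]; linarith
  have hβM : β * M = r / 64 := by rw [hβ]; field_simp
  have hdM : d' * M = d / 4 := by rw [hd']; field_simp
  set W : ℂ → ℂ := fun ζ => Complex.exp (β * Complex.log (1 - ζ)) with hW
  set T : ℂ → ℂ := fun ζ => ((1 + d' : ℝ) : ℂ) * (1 - W ζ) with hT
  have hWd : DifferentiableOn ℂ W (ball 0 1) := by
    intro ζ h
    refine DifferentiableAt.differentiableWithinAt ?_
    refine DifferentiableAt.cexp (DifferentiableAt.const_mul ?_ _)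
    exact DifferentiableAt.clog (by fun_prop) (Or.inl (one_sub_re_pos h))
  refine ⟨fun ζ => z + T ζ • (a - z), ?_, ?_, ?_, ?_⟩
  · exact ((((hWd.const_sub 1).const_mul _).smul_const (a - z))).const_add z
  · intro ζ hζ
    obtain ⟨X, Y, eW, hX0, hXle, hYX⟩ := cpow_sector hβ0 hβ1 hζ
    set t := (1 + d') * (1 - X) with ht
    set err : Cn n := (-(((1 + d') * Y : ℝ) : ℂ) * I) • (a - z) with herr
    have eT : z + T ζ • (a - z) = ((1 - t) • z + t • a) + err := by
      have : T ζ = (t : ℂ) + (-(((1 + d') * Y : ℝ) : ℂ) * I) := by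
        simp only [hT, hW]; rw [eW, ht]; push_cast; ring
      rw [this, add_smul, Complex.coe_smul, herr]
      module
    have hen : ‖err‖ ≤ (r / 20) * (1 + d' - t) := by
      rw [herr, norm_smul, norm_mul, norm_neg, Complex.norm_real, Complex.norm_I, mul_one,
        Real.norm_eq_abs, abs_mul, abs_of_pos (by linarith : 0 < 1 + d')]
      calc (1 + d') * |Y| * ‖a - z‖ ≤ (1 + d') * (3.2 * β * X) * M := by gcongr
        _ = 3.2 * (β * M) * ((1 + d') * X) := by ring
        _ = (r / 20) * (1 + d' - t) := by rw [hβM, ht]; ring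
    have ht1 : t < 1 + d' := by rw [ht]; nlinarith
    have ht2 : -(5 / 4 * β) ≤ t := by rw [ht]; nlinarith
    show z + T ζ • (a - z) ∈ _
    rw [eT]
    exact inset_line hKc hd hdr hz ha haz hM hβ0 hβ1 hd1 hd0 hβM hdM hrM hen ht1 ht2
  · simp [hT, hW]
  · intro s hs hy
    have : W s = (((1 - s) ^ β : ℝ) : ℂ) := by
      simp only [hW]
      rw [Real.rpow_def_of_pos (by linarith [hs.2]), Complex.ofReal_exp]
      congr 1
      have : (1 : ℂ) - s = ((1 - s : ℝ) : ℂ) := by push_cast; ring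
      rw [this, ← Complex.ofReal_log (by linarith [hs.2])]
      push_cast; ring
    have hT1 : T s = 1 := by
      simp only [hT]
      rw [this, hy, ← Complex.ofReal_one, ← Complex.ofReal_sub, ← Complex.ofReal_mul]
      congr 1
      field_simp
      ring
    show z + T s • (a - z) = a
    rw [hT1, one_smul]; abel

/-- Power-law bound for the distance of an extremal disc to the boundary. If `A ζ` were too deep
inside `K` compared with `1 - ‖ζ‖`, a rotation of the disc of `exists_inner_disc` would pass through
`A ζ` at the parameter `ζ`, contradicting `IsExtremal.no_inner_disc`. -/
theorem IsExtremal.inset_le (hK : IsCompact K) (hKc : Convex ℝ K) {z v : Cn n} (hv : v ≠ 0)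
    {lam : ℝ} {A : ℂ → Cn n} (hA : IsExtremal K z v lam A) {r : ℝ} (hr : 0 < r)
    (hz : z ∈ inset K r) :
    ∃ β C : ℝ, 0 < β ∧ β ≤ 1 ∧ 0 < C ∧ ∀ ζ ∈ ball (0 : ℂ) 1, ∀ d : ℝ, 0 ≤ d → A ζ ∈ inset K d →
      d ≤ C * (1 - ‖ζ‖) ^ β := by
  obtain ⟨M₀, hM₀, hM₀'⟩ := hK.isBounded.exists_pos_norm_le
  have hv0 : 0 < ‖v‖ := norm_pos_iff.2 hv
  set M := 2 * M₀ with hM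
  have hdiam : ∀ x ∈ K, ∀ y ∈ K, ‖x - y‖ ≤ M := fun x hx y hy => by
    have := norm_sub_le x y
    have := hM₀' x hx
    have := hM₀' y hy
    linarith
  have hMpos : 0 < M := by positivity
  have hbig : ∀ d : ℝ, 0 ≤ d → ∀ x ∈ inset K d, d ≤ M := by
    intro d hd x hx
    have h1 := hx ((d / ‖v‖) • v) (by
      rw [norm_smul, Real.norm_eq_abs, abs_of_nonneg (by positivity), div_mul_cancel₀ _ hv0.ne'])
    have h2 := hx 0 (by simpa using hd)
    have := hdiam _ h1 _ h2
    rw [add_sub_add_left_eq_sub, sub_zero, norm_smul, Real.norm_eq_abs,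
      abs_of_nonneg (by positivity), div_mul_cancel₀ _ hv0.ne'] at this
    exact this
  have hrM : r ≤ M := hbig r hr.le z hz
  set β := r / (64 * M) with hβ
  have hβ0 : 0 < β := by positivity
  have hβ1 : β ≤ 1 := by rw [hβ, div_le_iff₀ (by positivity)]; linarith
  have key : ∀ ζ ∈ ball (0 : ℂ) 1, ∀ d : ℝ, 0 < d → d ≤ r → A ζ ∈ inset K d →
      d ≤ 8 * M * (1 - ‖ζ‖) ^ β := by
    intro ζ hζ d hd hdr hin
    have hζ1 : ‖ζ‖ < 1 := by simpa using hζ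
    by_cases hζ0 : ζ = 0
    · rw [hζ0]; simp; linarith
    have hζpos : 0 < ‖ζ‖ := norm_pos_iff.2 hζ0
    set d' := d / (4 * M) with hd'
    have hd0 : 0 < d' := by positivity
    have hd1 : d' ≤ 1 / 4 := by rw [hd', div_le_iff₀ (by positivity)]; linarith
    set y := d' / (1 + d') with hy
    have hy0 : 0 < y := by positivity
    have hy1 : y < 1 := by rw [hy, div_lt_one (by positivity)]; linarith
    set s := 1 - y ^ (1 / β) with hs
    have hs1 : s < 1 := by
      have : 0 < y ^ (1 / β) := Real.rpow_pos_of_pos hy0 _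
      linarith
    have hs0 : 0 < s := by
      have : y ^ (1 / β) < 1 := Real.rpow_lt_one hy0.le hy1 (by positivity)
      linarith
    have hsy : (1 - s) ^ β = y := by
      rw [hs, sub_sub_cancel, ← Real.rpow_mul hy0.le, one_div, inv_mul_cancel₀ hβ0.ne',
        Real.rpow_one]
    have hle : ‖ζ‖ ≤ s := by
      by_contra hcon
      push Not at hcon
      obtain ⟨b, hb, hbK, hb0, hbs⟩ := exists_inner_disc hKc hd hdr hrM hz hin
        (hdiam _ (hA.maps ζ hζ) _ (inset_subset hr.le hz))
      have hq : ‖(s : ℂ) / ζ‖ < 1 := by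
        rw [norm_div, Complex.norm_real, Real.norm_eq_abs, abs_of_pos hs0, div_lt_one hζpos]
        exact hcon
      have hmaps : ∀ w ∈ ball (0 : ℂ) 1, w * ((s : ℂ) / ζ) ∈ ball (0 : ℂ) 1 := by
        intro w hw
        have : ‖w‖ < 1 := by simpa using hw
        rw [mem_ball_zero_iff, norm_mul]
        nlinarith [norm_nonneg w, norm_nonneg ((s : ℂ) / ζ)]
      refine hA.no_inner_disc hK hKc hv hζ hζ0 (B := fun w => b (w * ((s : ℂ) / ζ)))
        (hb.comp (by fun_prop) hmaps) (half_pos hd) (fun w hw => hbK _ (hmaps w hw)) (by simpa using hb0) ?_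
      show b (ζ * ((s : ℂ) / ζ)) = A ζ
      rw [mul_div_cancel₀ _ hζ0]
      exact hbs s ⟨hs0, hs1⟩ hsy
    have h1 : y ≤ (1 - ‖ζ‖) ^ β := by
      rw [← hsy]
      exact Real.rpow_le_rpow (by linarith) (by linarith) hβ0.le
    have h2 : d' / 2 ≤ y := by
      rw [hy]; apply div_le_div_of_nonneg_left hd0.le (by positivity); linarith
    calc d = 8 * M * (d' / 2) := by rw [hd']; field_simp; ring
      _ ≤ 8 * M * (1 - ‖ζ‖) ^ β := by gcongr; linarith
  refine ⟨β, M / r * (8 * M), hβ0, hβ1, by positivity, ?_⟩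
  intro ζ hζ d hd hin
  have hζ1 : ‖ζ‖ < 1 := by simpa using hζ
  rcases hd.eq_or_lt with h | h
  · rw [← h]
    have : 0 ≤ (1 - ‖ζ‖) ^ β := Real.rpow_nonneg (by linarith) _
    positivity
  have hmin : 0 < min d r := lt_min h hr
  have h1 := key ζ hζ (min d r) hmin (min_le_right _ _) (inset_anti hin (min_le_left _ _))
  have h2 : d ≤ M / r * min d r := by
    have h1r : 1 ≤ M / r := by rw [le_div_iff₀ hr]; linarith
    rcases min_choice d r with e | e
    · rw [e]; nlinarith
    · rw [e, div_mul_cancel₀ _ hr.ne']; exact hbig d hd _ hin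
  calc d ≤ M / r * min d r := h2
    _ ≤ M / r * (8 * M * (1 - ‖ζ‖) ^ β) := by gcongr
    _ = _ := by ring

end Growth

/-! ### Strictly convex domains -/

section Domain
variable {n : ℕ}

/-- A bounded convex domain `D` with a real-analytic defining function `ρ` on a neighbourhood `U` of
the boundary, whose real Hessian is positive definite at boundary points. -/
structure IsConvexDomain (ρ : Cn n → ℝ) (D U : Set (Cn n)) : Prop where
  isOpen : IsOpen D
  convex : Convex ℝ D
  bounded : Bornology.IsBounded D
  isOpen_nhd : IsOpen U
  frontier_subset : frontier D ⊆ U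
  analytic : AnalyticOnNhd ℝ ρ U
  inter_eq : D ∩ U = {z | z ∈ U ∧ ρ z < 0}
  hess : ∀ z ∈ frontier D, ∀ v : Cn n, v ≠ 0 → 0 < iteratedFDeriv ℝ 2 ρ z ![v, v]

/-- The real differential is twice the real part of the complex pairing with `∂ρ`. -/
theorem fderiv_eq_wirtinger (ρ : Cn n → ℝ) (b x : Cn n) :
    fderiv ℝ ρ b x = 2 * (∑ j, wirtinger ρ b j * x j).re := by
  have hx : x = ∑ j, ((x j).re • EuclideanSpace.single j (1 : ℂ) +
      (x j).im • EuclideanSpace.single j I) := by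
    ext k
    simp only [WithLp.ofLp_sum, Finset.sum_apply, PiLp.add_apply, PiLp.smul_apply,
      PiLp.single_apply]
    rw [Finset.sum_eq_single k]
    · simp
    · intro b _ hb
      simp [hb.symm]
    · simp
  conv_lhs => rw [hx]
  rw [map_sum, Complex.re_sum, Finset.mul_sum]
  refine Finset.sum_congr rfl fun j _ => ?_
  rw [map_add, map_smul, map_smul]
  simp only [wirtinger, smul_eq_mul]
  simp [Complex.mul_re, Complex.mul_im]
  ring

namespace IsConvexDomain
variable {ρ : Cn n → ℝ} {D U : Set (Cn n)}

theorem compact_closure (h : IsConvexDomain ρ D U) : IsCompact (closure D) := h.bounded.isCompact_closure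

theorem compact_frontier (h : IsConvexDomain ρ D U) : IsCompact (frontier D) :=
  h.compact_closure.of_isClosed_subset isClosed_frontier frontier_subset_closure

theorem closure_eq : closure D = D ∪ frontier D := by
  rw [closure_eq_self_union_frontier]

theorem neg_of_mem (h : IsConvexDomain ρ D U) {x : Cn n} (hx : x ∈ D) (hxU : x ∈ U) : ρ x < 0 := by
  have : x ∈ D ∩ U := ⟨hx, hxU⟩
  rw [h.inter_eq] at this
  exact this.2

theorem eq_zero (h : IsConvexDomain ρ D U) {b : Cn n} (hb : b ∈ frontier D) : ρ b = 0 := by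
  have hbU := h.frontier_subset hb
  refine le_antisymm ?_ ?_
  · have hc : ContinuousAt ρ b := (h.analytic b hbU).continuousAt
    by_contra hcon
    push Not at hcon
    have h1 : ∀ᶠ x in 𝓝 b, 0 < ρ x := hc.eventually (lt_mem_nhds hcon)
    have h2 : ∀ᶠ x in 𝓝 b, x ∈ U := h.isOpen_nhd.mem_nhds hbU
    have h3 : ∃ᶠ x in 𝓝 b, x ∈ D := mem_closure_iff_frequently.1 (frontier_subset_closure hb)
    obtain ⟨x, hx, hx1, hx2⟩ := (h3.and_eventually (h1.and h2)).exists
    exact absurd (h.neg_of_mem hx hx2) (not_lt.2 hx1.le)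
  · by_contra hcon
    push Not at hcon
    have : b ∈ D ∩ U := by rw [h.inter_eq]; exact ⟨hbU, hcon⟩
    rw [h.isOpen.frontier_eq] at hb
    exact hb.2 this.1

theorem nonpos (h : IsConvexDomain ρ D U) {x : Cn n} (hx : x ∈ closure D) (hxU : x ∈ U) : ρ x ≤ 0 := by
  rw [closure_eq] at hx
  rcases hx with hx | hx
  · exact (h.neg_of_mem hx hxU).le
  · exact (h.eq_zero hx).le

theorem mem_of_neg (h : IsConvexDomain ρ D U) {x : Cn n} (hxU : x ∈ U) (hx : ρ x < 0) : x ∈ D := by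
  have : x ∈ D ∩ U := by rw [h.inter_eq]; exact ⟨hxU, hx⟩
  exact this.1

theorem contDiffAt (h : IsConvexDomain ρ D U) {b : Cn n} (hb : b ∈ U) (k : ℕ∞) : ContDiffAt ℝ k ρ b :=
  (h.analytic b hb).contDiffAt

theorem analyticAt_fderiv (h : IsConvexDomain ρ D U) {b : Cn n} (hb : b ∈ U) : AnalyticAt ℝ (fderiv ℝ ρ) b :=
  (h.analytic b hb).fderiv

/-- Near a boundary point the second derivative of `ρ` is uniformly positive. -/
theorem local_hess (h : IsConvexDomain ρ D U) {b : Cn n} (hb : b ∈ frontier D) :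
    ∃ c > 0, ∃ r > 0, ball b r ⊆ U ∧ ∀ x ∈ ball b r, ∀ w : Cn n,
      2 * c * ‖w‖ ^ 2 ≤ fderiv ℝ (fderiv ℝ ρ) x w w := by
  have hbU := h.frontier_subset hb
  have hcont : ContinuousAt (fderiv ℝ (fderiv ℝ ρ)) b :=
    (h.analyticAt_fderiv hbU).fderiv.continuousAt
  obtain ⟨m, hm, hmb⟩ : ∃ m > 0, ∀ w ∈ sphere (0 : Cn n) 1, m ≤ fderiv ℝ (fderiv ℝ ρ) b w w := by
    rcases (sphere (0 : Cn n) 1).eq_empty_or_nonempty with he | hne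
    · exact ⟨1, one_pos, by simp [he]⟩
    obtain ⟨w₀, hw₀, hmin⟩ := (isCompact_sphere (0 : Cn n) 1).exists_isMinOn hne
      (f := fun w => fderiv ℝ (fderiv ℝ ρ) b w w) (by fun_prop)
    have hw0 : w₀ ≠ 0 := by rintro rfl; simp at hw₀
    have := h.hess b hb w₀ hw0
    rw [iteratedFDeriv_two_apply] at this
    exact ⟨_, by simpa using this, fun w hw => hmin hw⟩
  have hm2 : ∀ w : Cn n, m * ‖w‖ ^ 2 ≤ fderiv ℝ (fderiv ℝ ρ) b w w := by
    intro w
    by_cases hw : w = 0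
    · simp [hw]
    have hw' : 0 < ‖w‖ := norm_pos_iff.2 hw
    have := hmb (‖w‖⁻¹ • w) (by
      rw [mem_sphere_zero_iff_norm, norm_smul, norm_inv, norm_norm, inv_mul_cancel₀ hw'.ne'])
    simp only [map_smul, smul_eq_mul, _root_.smul_apply] at this
    have h3 := mul_le_mul_of_nonneg_right this (sq_nonneg ‖w‖)
    calc m * ‖w‖ ^ 2 ≤ _ := h3
      _ = _ := by field_simp
  obtain ⟨r₁, hr₁, hU⟩ := Metric.isOpen_iff.1 h.isOpen_nhd b hbU
  have hev : ∀ᶠ x in 𝓝 b, ‖fderiv ℝ (fderiv ℝ ρ) x - fderiv ℝ (fderiv ℝ ρ) b‖ < m / 2 := by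
    have hc : ContinuousAt (fun x => ‖fderiv ℝ (fderiv ℝ ρ) x - fderiv ℝ (fderiv ℝ ρ) b‖) b := by
      have := (continuous_norm (E := Cn n →L[ℝ] Cn n →L[ℝ] ℝ)).continuousAt.comp
        (hcont.sub (continuousAt_const (y := fderiv ℝ (fderiv ℝ ρ) b)))
      exact this
    refine hc.eventually (gt_mem_nhds ?_)
    show ‖fderiv ℝ (fderiv ℝ ρ) b - fderiv ℝ (fderiv ℝ ρ) b‖ < m / 2
    rw [sub_self, ContinuousLinearMap.opNorm_zero]; exact half_pos hm
  obtain ⟨r₂, hr₂, hH⟩ := Metric.mem_nhds_iff.1 hev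
  refine ⟨m / 4, by positivity, min r₁ r₂, lt_min hr₁ hr₂,
    (ball_subset_ball (min_le_left _ _)).trans hU, ?_⟩
  intro x hx w
  have h1 := hH (ball_subset_ball (min_le_right _ _) hx)
  simp only [Set.mem_ofPred_eq] at h1
  have h2 : |(fderiv ℝ (fderiv ℝ ρ) x - fderiv ℝ (fderiv ℝ ρ) b) w w| ≤ m / 2 * ‖w‖ * ‖w‖ := by
    rw [← Real.norm_eq_abs]
    exact (ContinuousLinearMap.le_opNorm₂ _ _ _).trans (by gcongr)
  have h3 := (abs_le.1 h2).1
  simp only [_root_.sub_apply] at h3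
  have h4 := hm2 w
  nlinarith

/-- Second-order Taylor lower bound near a boundary point. -/
theorem local_taylor (h : IsConvexDomain ρ D U) {b : Cn n} (hb : b ∈ frontier D) :
    ∃ c > 0, ∃ r > 0, ball b r ⊆ U ∧ ∀ x ∈ ball b r, ∀ y ∈ ball b r,
      ρ x + fderiv ℝ ρ x (y - x) + c * ‖y - x‖ ^ 2 ≤ ρ y := by
  obtain ⟨c, hc, r, hr, hU, hH⟩ := h.local_hess hb
  refine ⟨c, hc, r, hr, hU, fun x hx y hy => ?_⟩
  obtain ⟨w, hw⟩ : ∃ w, w = y - x := ⟨_, rfl⟩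
  rw [← hw]
  have hseg : ∀ t ∈ Icc (0 : ℝ) 1, x + t • w ∈ ball b r := by
    intro t ht
    have := (convex_ball b r) hx hy (sub_nonneg.2 ht.2) ht.1 (by ring)
    convert this using 1
    rw [hw]; module
  have hl : ∀ t : ℝ, HasDerivAt (fun t : ℝ => x + t • w) w t := by
    intro t
    simpa using ((hasDerivAt_id t).smul_const w).const_add x
  have hg : ∀ t ∈ Icc (0 : ℝ) 1, HasDerivAt (fun t : ℝ => ρ (x + t • w))
      (fderiv ℝ ρ (x + t • w) w) t := by
    intro t ht
    have := (h.analytic _ (hU (hseg t ht))).differentiableAt.hasFDerivAt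
    exact this.comp_hasDerivAt t (hl t)
  have hg2 : ∀ t ∈ Icc (0 : ℝ) 1, HasDerivAt (fun t : ℝ => fderiv ℝ ρ (x + t • w) w)
      (fderiv ℝ (fderiv ℝ ρ) (x + t • w) w w) t := by
    intro t ht
    have := (h.analyticAt_fderiv (hU (hseg t ht))).differentiableAt.hasFDerivAt
    have h2 := this.comp_hasDerivAt t (hl t)
    exact h2.clm_apply (hasDerivAt_const t w) |>.congr_deriv (by simp)
  have hmono1 : MonotoneOn (fun t : ℝ => fderiv ℝ ρ (x + t • w) w - 2 * c * ‖w‖ ^ 2 * t)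
      (Icc 0 1) := by
    have hd : ∀ t ∈ Icc (0 : ℝ) 1, HasDerivAt
        (fun t : ℝ => fderiv ℝ ρ (x + t • w) w - 2 * c * ‖w‖ ^ 2 * t)
        (fderiv ℝ (fderiv ℝ ρ) (x + t • w) w w - 2 * c * ‖w‖ ^ 2) t := by
      intro t ht
      exact (hg2 t ht).sub (by simpa using (hasDerivAt_id t).const_mul (2 * c * ‖w‖ ^ 2))
    refine monotoneOn_of_hasDerivWithinAt_nonneg (convex_Icc 0 1)
      (fun t ht => (hd t ht).continuousAt.continuousWithinAt)
      (fun t ht => (hd t (interior_subset ht)).hasDerivWithinAt) ?_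
    intro t ht
    have := hH _ (hseg t (interior_subset ht)) w
    linarith
  have hmono2 : MonotoneOn (fun t : ℝ => ρ (x + t • w) - fderiv ℝ ρ x w * t - c * ‖w‖ ^ 2 * t ^ 2)
      (Icc 0 1) := by
    have hd : ∀ t ∈ Icc (0 : ℝ) 1, HasDerivAt
        (fun t : ℝ => ρ (x + t • w) - fderiv ℝ ρ x w * t - c * ‖w‖ ^ 2 * t ^ 2)
        (fderiv ℝ ρ (x + t • w) w - fderiv ℝ ρ x w - c * ‖w‖ ^ 2 * (2 * t)) t := by
      intro t ht
      refine ((hg t ht).sub ?_).sub ?_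
      · simpa using (hasDerivAt_id t).const_mul (fderiv ℝ ρ x w)
      · simpa using (hasDerivAt_pow 2 t).const_mul (c * ‖w‖ ^ 2)
    refine monotoneOn_of_hasDerivWithinAt_nonneg (convex_Icc 0 1)
      (fun t ht => (hd t ht).continuousAt.continuousWithinAt)
      (fun t ht => (hd t (interior_subset ht)).hasDerivWithinAt) ?_
    intro t ht
    have ht' := interior_subset ht
    have := hmono1 (left_mem_Icc.2 zero_le_one) ht' ht'.1
    simp only [zero_smul, add_zero, mul_zero, sub_zero] at this
    linarith
  have := hmono2 (left_mem_Icc.2 zero_le_one) (right_mem_Icc.2 zero_le_one) zero_le_one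
  have e : x + (1 : ℝ) • w = y := by rw [hw]; simp
  simp only [zero_smul, add_zero, mul_zero, sub_zero, e] at this
  simp at this
  linarith

/-- Strict convexity in quantitative form: `closure D` lies in a paraboloid-like region on one
side of each supporting hyperplane. -/
theorem strong_support (h : IsConvexDomain ρ D U) : ∃ c > 0, ∀ b ∈ frontier D, ∀ x ∈ closure D,
    c * ‖x - b‖ ^ 2 ≤ -fderiv ℝ ρ b (x - b) := by
  refine h.compact_frontier.induction_on (p := fun S => ∃ c > 0, ∀ b ∈ S, ∀ x ∈ closure D,
    c * ‖x - b‖ ^ 2 ≤ -fderiv ℝ ρ b (x - b)) ⟨1, one_pos, by simp⟩ ?_ ?_ ?_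
  · rintro S T hST ⟨c, hc, hT⟩
    exact ⟨c, hc, fun b hb => hT b (hST hb)⟩
  · rintro S T ⟨c, hc, hS⟩ ⟨c', hc', hT⟩
    refine ⟨min c c', lt_min hc hc', ?_⟩
    rintro b (hb | hb) x hx
    · exact (by gcongr; exact min_le_left _ _ : _ ≤ c * ‖x - b‖ ^ 2).trans (hS b hb x hx)
    · exact (by gcongr; exact min_le_right _ _ : _ ≤ c' * ‖x - b‖ ^ 2).trans (hT b hb x hx)
  intro b₀ hb₀
  obtain ⟨c, hc, r, hr, hU, hT⟩ := h.local_taylor hb₀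
  obtain ⟨L₀, hL₀, hL⟩ := h.compact_closure.isBounded.exists_pos_norm_le
  obtain ⟨L, hLdef⟩ : ∃ L, L = 2 * L₀ + r := ⟨_, rfl⟩
  have hLpos : 0 < L := by rw [hLdef]; positivity
  obtain ⟨s, hs⟩ : ∃ s, s = r / (3 * L) := ⟨_, rfl⟩
  have hs0 : 0 < s := by rw [hs]; positivity
  have hs1 : s ≤ 1 := by rw [hs, div_le_one (by positivity)]; linarith
  refine ⟨frontier D ∩ ball b₀ (r / 2), ?_, c * s, by positivity, ?_⟩
  · exact inter_mem_nhdsWithin _ (ball_mem_nhds _ (half_pos hr))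
  rintro b ⟨hb, hbr⟩ x hx
  have hbc := frontier_subset_closure hb
  have hxb : ‖x - b‖ ≤ L := by
    have := norm_sub_le x b
    have := hL x hx
    have := hL b hbc
    linarith
  have hx' : b + s • (x - b) ∈ closure D := by
    have := h.convex.closure hbc hx (sub_nonneg.2 hs1) hs0.le (by ring)
    convert this using 1
    module
  have hbr' : b ∈ ball b₀ r := ball_subset_ball (by linarith) hbr
  have hx'r : b + s • (x - b) ∈ ball b₀ r := by
    rw [mem_ball, dist_eq_norm] at hbr ⊢
    have : ‖s • (x - b)‖ ≤ r / 3 := by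
      rw [norm_smul, Real.norm_eq_abs, abs_of_pos hs0]
      calc s * ‖x - b‖ ≤ s * L := by gcongr
        _ = r / 3 := by rw [hs]; field_simp
    calc ‖b + s • (x - b) - b₀‖ = ‖(b - b₀) + s • (x - b)‖ := by congr 1; abel
      _ ≤ ‖b - b₀‖ + ‖s • (x - b)‖ := norm_add_le _ _
      _ < r := by linarith
  have h1 := hT b hbr' _ hx'r
  have h2 := h.nonpos hx' (hU hx'r)
  rw [h.eq_zero hb, add_sub_cancel_left, map_smul, norm_smul, Real.norm_eq_abs, abs_of_pos hs0,
    smul_eq_mul] at h1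
  have h3 : s * (c * s * ‖x - b‖ ^ 2) ≤ s * (-fderiv ℝ ρ b (x - b)) := by nlinarith
  exact le_of_mul_le_mul_left h3 hs0

theorem fderiv_bound (h : IsConvexDomain ρ D U) : ∃ M > 0, ∀ b ∈ frontier D, ‖fderiv ℝ ρ b‖ ≤ M := by
  have hc : ContinuousOn (fderiv ℝ ρ) (frontier D) := fun b hb =>
    (h.analyticAt_fderiv (h.frontier_subset hb)).continuousAt.continuousWithinAt
  obtain ⟨M, hM⟩ := h.compact_frontier.exists_bound_of_continuousOn hc
  exact ⟨max M 1, by positivity, fun b hb => (hM b hb).trans (le_max_left _ _)⟩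

theorem wirtinger_lipschitz (h : IsConvexDomain ρ D U) (j : Fin n) : ∃ L, 0 ≤ L ∧ ∀ a ∈ frontier D, ∀ b ∈ frontier D,
    ‖wirtinger ρ a j - wirtinger ρ b j‖ ≤ L * ‖a - b‖ := by
  have hl : LocallyLipschitzOn (frontier D) (fderiv ℝ ρ) := by
    intro b hb
    obtain ⟨C, t, ht, hlip⟩ := ((h.analyticAt_fderiv (h.frontier_subset hb)).contDiffAt
      (n := 1)).exists_lipschitzOnWith
    exact ⟨C, t, mem_nhdsWithin_of_mem_nhds ht, hlip⟩
  obtain ⟨C, hC⟩ := hl.exists_lipschitzOnWith_of_compact h.compact_frontier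
  refine ⟨C, C.2, fun a ha b hb => ?_⟩
  have h1 := hC.norm_sub_le ha hb
  have h2 : ∀ w : Cn n, ‖w‖ = 1 → |fderiv ℝ ρ a w - fderiv ℝ ρ b w| ≤ C * ‖a - b‖ := by
    intro w hw
    rw [← _root_.sub_apply, ← Real.norm_eq_abs]
    refine (ContinuousLinearMap.le_opNorm _ _).trans ?_
    rw [hw, mul_one]; exact h1
  have h3 := h2 (EuclideanSpace.single j 1) (by simp)
  have h4 := h2 (EuclideanSpace.single j I) (by simp)
  have e : wirtinger ρ a j - wirtinger ρ b j = (1 / 2 : ℂ) *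
      (((fderiv ℝ ρ a (EuclideanSpace.single j 1) - fderiv ℝ ρ b (EuclideanSpace.single j 1) : ℝ) : ℂ)
      - I * ((fderiv ℝ ρ a (EuclideanSpace.single j I) -
        fderiv ℝ ρ b (EuclideanSpace.single j I) : ℝ) : ℂ)) := by
    simp only [wirtinger]; push_cast; ring
  rw [e, norm_mul]
  calc _ ≤ ‖(1 / 2 : ℂ)‖ * (C * ‖a - b‖ + C * ‖a - b‖) := by
        gcongr
        refine (norm_sub_le _ _).trans (add_le_add ?_ ?_)
        · rw [Complex.norm_real]; exact h3
        · rw [norm_mul, Complex.norm_I, one_mul, Complex.norm_real]; exact h4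
    _ = _ := by norm_num; ring

end IsConvexDomain
end Domain

/-! ### Boundary regularity of extremal discs -/

section Boundary
variable {n : ℕ}

namespace IsConvexDomain
variable {ρ : Cn n → ℝ} {D U : Set (Cn n)}

theorem exists_near_frontier (h : IsConvexDomain ρ D U) {x : Cn n} (hx : x ∈ closure D) {τ : ℝ}
    (hτ : x ∉ inset (closure D) τ) : ∃ b ∈ frontier D, ‖x - b‖ ≤ τ := by
  simp only [inset, Set.mem_ofPred_eq, not_forall] at hτ
  obtain ⟨e, he, hxe⟩ := hτ
  have hpre : IsPreconnected (segment ℝ x (x + e)) := (convex_segment _ _).isPreconnected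
  have : ∃ b ∈ segment ℝ x (x + e), b ∈ frontier D := by
    by_contra hcon
    push Not at hcon
    have hsub : segment ℝ x (x + e) ⊆ D ∪ (closure D)ᶜ := by
      intro y hy
      by_cases hyc : y ∈ closure D
      · rw [closure_eq] at hyc
        exact Or.inl (hyc.resolve_right (hcon y hy))
      · exact Or.inr hyc
    have hne : (segment ℝ x (x + e) ∩ D).Nonempty := by
      refine ⟨x, left_mem_segment _ _ _, ?_⟩
      have := hsub (left_mem_segment ℝ x (x + e))
      exact this.resolve_right fun h' => h' hx
    have h3 := hpre.subset_left_of_subset_union h.isOpen isClosed_closure.isOpen_compl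
      (disjoint_compl_right.mono_left subset_closure) hsub hne
    exact hxe (subset_closure (h3 (right_mem_segment _ _ _)))
  obtain ⟨b, hb, hbf⟩ := this
  refine ⟨b, hbf, ?_⟩
  rw [segment_eq_image'] at hb
  obtain ⟨θ, hθ, rfl⟩ := hb
  simp only [add_sub_cancel_left, sub_add_cancel_left, norm_neg, norm_smul, Real.norm_eq_abs,
    abs_of_nonneg hθ.1]
  nlinarith [norm_nonneg e, hθ.2]

/-- Growth of the derivative of an extremal disc, obtained from Harnack's inequality applied to
`-⟨∂ρ(b), A - b⟩`, whose real part is nonnegative and dominates `‖A - b‖²`. -/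
theorem deriv_bound (h : IsConvexDomain ρ D U) {z v : Cn n} (hz : z ∈ D) (hv : v ≠ 0) {lam : ℝ}
    {A : ℂ → Cn n} (hA : IsExtremal (closure D) z v lam A) :
    ∃ β C : ℝ, 0 < β ∧ β ≤ 1 ∧ 0 ≤ C ∧ ∀ ζ ∈ ball (0 : ℂ) 1,
      ‖deriv A ζ‖ ≤ C * (1 - ‖ζ‖) ^ (β / 2 - 1) ∧
      ∃ b ∈ frontier D, ‖A ζ - b‖ ≤ C * (1 - ‖ζ‖) ^ β := by
  obtain ⟨r, hr, hrD⟩ := Metric.isOpen_iff.1 h.isOpen z hz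
  have hzr : z ∈ inset (closure D) (r / 2) := by
    rw [← closedBall_subset_iff_inset]
    exact (closedBall_subset_ball (by linarith)).trans (hrD.trans subset_closure)
  obtain ⟨β, C, hβ, hβ1, hC, hest⟩ :=
    hA.inset_le h.compact_closure h.convex.closure hv (half_pos hr) hzr
  obtain ⟨c, hc, hsup⟩ := h.strong_support
  obtain ⟨M, hM, hMb⟩ := h.fderiv_bound
  obtain ⟨C₁, hC₁⟩ : ∃ C₁, C₁ = 4 * Real.sqrt (10 * M * C / c) := ⟨_, rfl⟩
  have hC₁0 : 0 ≤ C₁ := by rw [hC₁]; positivity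
  refine ⟨β, C₁ + 2 * C, hβ, hβ1, by positivity, ?_⟩
  intro ζ hζ
  have hζ1 : ‖ζ‖ < 1 := by simpa using hζ
  obtain ⟨R, hR⟩ : ∃ R, R = 1 - ‖ζ‖ := ⟨_, rfl⟩
  have hR0 : 0 < R := by rw [hR]; linarith
  rw [← hR]
  have hRβ : 0 < R ^ β := Real.rpow_pos_of_pos hR0 _
  obtain ⟨τ, hτ⟩ : ∃ τ, τ = 2 * C * R ^ β := ⟨_, rfl⟩
  have hτ0 : 0 < τ := by rw [hτ]; positivity
  have hnot : A ζ ∉ inset (closure D) τ := by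
    intro hin
    have := hest ζ hζ τ hτ0.le hin
    rw [← hR, hτ] at this
    nlinarith [mul_pos hC hRβ]
  obtain ⟨b, hb, hbτ⟩ := h.exists_near_frontier (hA.maps ζ hζ) hnot
  refine ⟨?_, b, hb, hbτ.trans ?_⟩
  swap
  · rw [hτ]; gcongr; linarith
  have hballsub : ball ζ R ⊆ ball (0 : ℂ) 1 := by
    apply ball_subset_ball'
    rw [dist_zero_right, hR]; linarith
  obtain ⟨q, hq⟩ : ∃ q : ℂ → ℂ, q = fun w => -2 * ∑ j, wirtinger ρ b j * (A w - b) j := ⟨_, rfl⟩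
  have hqre : ∀ w, (q w).re = -fderiv ℝ ρ b (A w - b) := by
    intro w
    rw [fderiv_eq_wirtinger, hq]
    simp
  have hAj : ∀ j, DifferentiableOn ℂ (fun w => (A w - b) j) (ball 0 1) := by
    intro j
    exact (EuclideanSpace.proj (𝕜 := ℂ) j : Cn n →L[ℂ] ℂ).differentiable.comp_differentiableOn
      (hA.hol.sub_const b)
  have hqd : DifferentiableOn ℂ q (ball ζ R) := by
    rw [hq]
    refine DifferentiableOn.mono ?_ hballsub
    exact (DifferentiableOn.fun_sum fun j _ => (hAj j).const_mul _).const_mul _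
  have hlow : ∀ w ∈ ball ζ R, c * ‖A w - b‖ ^ 2 ≤ (q w).re := by
    intro w hw
    rw [hqre]
    exact hsup b hb _ (hA.maps w (hballsub hw))
  have hqζ : (q ζ).re ≤ M * τ := by
    rw [hqre]
    calc _ ≤ |fderiv ℝ ρ b (A ζ - b)| := neg_le_abs _
      _ ≤ ‖fderiv ℝ ρ b‖ * ‖A ζ - b‖ := (fderiv ℝ ρ b).le_opNorm _
      _ ≤ M * τ := by gcongr; exact hMb b hb
  have hup := re_le_of_re_nonneg hR0 (mul_pos hM hτ0) hqd
    (fun w hw => (by positivity : (0 : ℝ) ≤ c * ‖A w - b‖ ^ 2).trans (hlow w hw)) hqζ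
  obtain ⟨s, hs⟩ : ∃ s, s = Real.sqrt (10 * M * C / c) * R ^ (β / 2) := ⟨_, rfl⟩
  have hs2 : s ^ 2 = 5 * (M * τ) / c := by
    rw [hs, mul_pow, Real.sq_sqrt (by positivity), ← Real.rpow_natCast, ← Real.rpow_mul hR0.le, hτ]
    norm_num
    field_simp
    ring
  have hs0 : 0 ≤ s := by rw [hs]; positivity
  have hAb : ∀ w ∈ ball ζ (R / 2), ‖A w - b‖ ≤ s := by
    intro w hw
    have h1 := hup w hw
    have h2 := hlow w (ball_subset_ball (by linarith) hw)
    refine le_of_sq_le_sq ?_ hs0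
    rw [hs2, le_div_iff₀ hc]
    linarith
  have hcl : closedBall ζ (R / 4) ⊆ ball ζ (R / 2) := closedBall_subset_ball (by linarith)
  have hd4 : DiffContOnCl ℂ (fun w => A w - b) (ball ζ (R / 4)) := by
    refine DifferentiableOn.diffContOnCl_ball ?_ (U := ball 0 1)
      (hcl.trans ((ball_subset_ball (by linarith)).trans hballsub))
    exact hA.hol.sub_const b
  have hder := Complex.norm_deriv_le_of_forall_mem_sphere_norm_le (by positivity) hd4
    (fun w hw => hAb w (hcl (sphere_subset_closedBall hw)))
  rw [deriv_sub_const] at hder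
  refine hder.trans ?_
  have e : s / (R / 4) = C₁ * R ^ (β / 2 - 1) := by
    rw [hs, hC₁, Real.rpow_sub_one hR0.ne']
    field_simp
  rw [e]
  have : 0 ≤ R ^ (β / 2 - 1) := by positivity
  gcongr
  linarith

/-- Extremal discs extend Hölder-continuously to the closed disc and are proper. -/
theorem exists_regular_extremal (h : IsConvexDomain ρ D U) {z v : Cn n} (hz : z ∈ D) (hv : v ≠ 0) :
    ∃ lam A, IsExtremal (closure D) z v lam A ∧ ContinuousOn A (closedBall 0 1) ∧ HolderS A ∧
      ∀ ζ ∈ sphere (0 : ℂ) 1, A ζ ∈ frontier D := by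
  obtain ⟨r, hr, hrD⟩ := Metric.isOpen_iff.1 h.isOpen z hz
  have hzr : z ∈ inset (closure D) (r / 2) := by
    rw [← closedBall_subset_iff_inset]
    exact (closedBall_subset_ball (by linarith)).trans (hrD.trans subset_closure)
  obtain ⟨lam, A₀, hA₀⟩ := exists_extremal h.compact_closure hv (half_pos hr) hzr
  obtain ⟨β, C, hβ, hβ1, hC, hest⟩ := h.deriv_bound hz hv hA₀
  obtain ⟨A, hAc, hAeq, C', hC', hAh⟩ := hardy_littlewood hC (half_pos hβ) (by linarith) hA₀.hol
    (fun ζ hζ => (hest ζ hζ).1)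
  have h0 : (0 : ℂ) ∈ ball (0 : ℂ) 1 := mem_ball_self one_pos
  have hev : A =ᶠ[𝓝 0] A₀ := hAeq.eventuallyEq_of_mem (isOpen_ball.mem_nhds h0)
  refine ⟨lam, A, ⟨hA₀.hol.congr hAeq, fun ζ hζ => by rw [hAeq hζ]; exact hA₀.maps ζ hζ,
    by rw [hAeq h0]; exact hA₀.zero, by rw [hev.deriv_eq]; exact hA₀.der, hA₀.pos, hA₀.max⟩, hAc,
    ⟨β / 2, half_pos hβ, by linarith, C', hC', fun x hx y hy =>
      hAh x (sphere_subset_closedBall hx) y (sphere_subset_closedBall hy)⟩, ?_⟩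
  intro ζ hζ
  have hfne : (frontier D).Nonempty := by
    obtain ⟨b, hb, _⟩ := (hest 0 h0).2
    exact ⟨b, hb⟩
  have hcl : closure (ball (0 : ℂ) 1) = closedBall 0 1 := closure_ball _ one_ne_zero
  have hle : infDist (A ζ) (frontier D) ≤ C * (1 - ‖ζ‖) ^ β := by
    refine le_on_closure (s := ball (0 : ℂ) 1) (f := fun ζ => infDist (A ζ) (frontier D))
      (g := fun ζ => C * (1 - ‖ζ‖) ^ β) ?_ ?_ ?_ ?_
    · intro w hw
      obtain ⟨b, hb, hbw⟩ := (hest w hw).2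
      simp only [hAeq hw]
      refine (infDist_le_dist_of_mem hb).trans ?_
      rwa [dist_eq_norm]
    · rw [hcl]
      exact (continuous_infDist_pt _).comp_continuousOn hAc
    · refine Continuous.continuousOn (continuous_const.mul ?_)
      exact (continuous_const.sub continuous_norm).rpow_const fun _ => Or.inr hβ.le
    · rw [hcl]; exact sphere_subset_closedBall hζ
  have hζ1 : ‖ζ‖ = 1 := by simpa using hζ
  rw [hζ1, sub_self, Real.zero_rpow hβ.ne', mul_zero] at hle
  exact (isClosed_frontier.mem_iff_infDist_zero hfne).2 (le_antisymm hle infDist_nonneg)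

end IsConvexDomain
end Boundary

/-! ### Multipliers and orthogonality -/

section Dual

theorem eq_zero_of_circleAverage_eq_zero {f : ℂ → ℝ} (hf : ContinuousOn f (sphere 0 1))
    (h0 : ∀ ζ ∈ sphere (0 : ℂ) 1, 0 ≤ f ζ) (havg : Real.circleAverage f 0 1 = 0) :
    ∀ ζ ∈ sphere (0 : ℂ) 1, f ζ = 0 := by
  intro ζ hζ
  by_contra hne
  have hpos : 0 < f ζ := lt_of_le_of_ne (h0 ζ hζ) (Ne.symm hne)
  have hmem : ∀ θ : ℝ, circleMap 0 1 θ ∈ sphere (0 : ℂ) 1 :=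
    fun θ => circleMap_mem_sphere 0 zero_le_one θ
  have hc : Continuous fun θ : ℝ => f (circleMap 0 1 θ) :=
    hf.comp_continuous (continuous_circleMap 0 1) hmem
  have hθ : circleMap 0 1 (toIcoMod Real.two_pi_pos 0 (arg ζ)) = ζ := by
    have h1 : circleMap 0 1 (arg ζ) = ζ := by
      have := Complex.norm_mul_exp_arg_mul_I ζ
      rw [mem_sphere_zero_iff_norm.1 hζ] at this
      simpa [circleMap] using this
    exact ((periodic_circleMap (0 : ℂ) 1).sub_zsmul_eq _).trans h1
  have hIco := toIcoMod_mem_Ico Real.two_pi_pos 0 (arg ζ)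
  rw [zero_add] at hIco
  have hint := intervalIntegral.integral_pos Real.two_pi_pos hc.continuousOn
    (fun θ _ => h0 _ (hmem θ)) ⟨_, Ico_subset_Icc_self hIco, by rw [hθ]; exact hpos⟩
  rw [Real.circleAverage_def, smul_eq_mul] at havg
  have := mul_pos (inv_pos.2 Real.two_pi_pos) hint
  exact this.ne' havg

/-- A function with positive real part on the circle becomes, after multiplication by a positive
function `p`, the boundary value of a zero-free holomorphic function `exp (i H)`, where `H` is the
holomorphic function with `Re H = arg q` on the circle. -/
theorem exists_multiplier {q : ℂ → ℂ} (hq : HolderS q)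
    (hpos : ∀ ζ ∈ sphere (0 : ℂ) 1, 0 < (q ζ).re) :
    ∃ (p : ℂ → ℝ) (E : ℂ → ℂ), HolderS p ∧ (∀ ζ ∈ sphere (0 : ℂ) 1, 0 < p ζ) ∧
      ContinuousOn E (closedBall 0 1) ∧ DifferentiableOn ℂ E (ball 0 1) ∧ (∀ ζ, E ζ ≠ 0) ∧
      ∀ ζ ∈ sphere (0 : ℂ) 1, (p ζ : ℂ) * q ζ = E ζ := by
  have hlog := hq.clog hpos
  obtain ⟨H, hHc, hHd, hHh, hHre, -⟩ := privalov hlog.im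
  have hkey : ∀ ζ ∈ sphere (0 : ℂ) 1, I * H ζ - Complex.log (q ζ) =
      ((I * H ζ - Complex.log (q ζ)).re : ℝ) := by
    intro ζ hζ
    refine Complex.ext (by simp) ?_
    have := hHre ζ hζ
    simp only [sub_im, mul_im, I_re, I_im, zero_mul, one_mul, ofReal_im, zero_add]
    rw [this, sub_self]
  refine ⟨fun ζ => (Complex.exp (I * H ζ - Complex.log (q ζ))).re, fun ζ => Complex.exp (I * H ζ),
    ((((holderS_const I).mul hHh).sub hlog).cexp).re, ?_, ?_, ?_, fun ζ => Complex.exp_ne_zero _, ?_⟩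
  · intro ζ hζ
    show 0 < (Complex.exp (I * H ζ - Complex.log (q ζ))).re
    rw [hkey ζ hζ, Complex.exp_ofReal_re]
    exact Real.exp_pos _
  · exact (continuousOn_const.mul hHc).cexp
  · exact (hHd.const_mul I).cexp
  · intro ζ hζ
    have hq0 : q ζ ≠ 0 := by
      intro h; have := hpos ζ hζ; rw [h] at this; simp at this
    have e : ((Complex.exp (I * H ζ - Complex.log (q ζ))).re : ℂ) =
        Complex.exp (I * H ζ - Complex.log (q ζ)) := by
      rw [hkey ζ hζ, Complex.exp_ofReal_re, Complex.ofReal_exp]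
    show ((Complex.exp (I * H ζ - Complex.log (q ζ))).re : ℂ) * q ζ = _
    rw [e, Complex.exp_sub, Complex.exp_log hq0, div_mul_cancel₀ _ hq0]

/-- A Hölder function `g` on the circle that is real-orthogonal to all holomorphic `k` with Hölder
boundary values and `k 0 = 0` is itself the boundary value of a holomorphic function. Write
`g = (T + conj F) / 2` with `T` and `F` holomorphic, and test with `k = F - F 0`. -/
theorem exists_holo_of_orthogonal {g : ℂ → ℂ} (hg : HolderS g)
    (hort : ∀ k : ℂ → ℂ, ContinuousOn k (closedBall 0 1) → DifferentiableOn ℂ k (ball 0 1) →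
      HolderS k → k 0 = 0 → Real.circleAverage (fun ζ => (g ζ * k ζ).re) 0 1 = 0) :
    ∃ G : ℂ → ℂ, ContinuousOn G (closedBall 0 1) ∧ DifferentiableOn ℂ G (ball 0 1) ∧
      ∀ ζ ∈ sphere (0 : ℂ) 1, G ζ = g ζ := by
  obtain ⟨P, hPc, hPd, hPh, hPre, -⟩ := privalov hg.re
  obtain ⟨Q, hQc, hQd, hQh, hQre, -⟩ := privalov hg.im
  obtain ⟨F, hF⟩ : ∃ F : ℂ → ℂ, F = fun ζ => P ζ - I * Q ζ := ⟨_, rfl⟩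
  obtain ⟨T, hT⟩ : ∃ T : ℂ → ℂ, T = fun ζ => P ζ + I * Q ζ := ⟨_, rfl⟩
  have hFc : ContinuousOn F (closedBall 0 1) := hF ▸ hPc.sub (continuousOn_const.mul hQc)
  have hFd : DifferentiableOn ℂ F (ball 0 1) := hF ▸ hPd.sub (hQd.const_mul I)
  have hFh : HolderS F := hF ▸ hPh.sub ((holderS_const I).mul hQh)
  have hTc : ContinuousOn T (closedBall 0 1) := hT ▸ hPc.add (continuousOn_const.mul hQc)
  have hTd : DifferentiableOn ℂ T (ball 0 1) := hT ▸ hPd.add (hQd.const_mul I)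
  have hsplit : ∀ ζ ∈ sphere (0 : ℂ) 1, g ζ = (1 / 2) * T ζ + (1 / 2) * star (F ζ) := by
    intro ζ hζ
    have h1 := hPre ζ hζ
    have h2 := hQre ζ hζ
    rw [hF, hT]
    apply Complex.ext
    · simp [← h1]; ring
    · simp [← h2]; ring
  obtain ⟨k, hk⟩ : ∃ k : ℂ → ℂ, k = fun ζ => F ζ - F 0 := ⟨_, rfl⟩
  have hkc : ContinuousOn k (closedBall 0 1) := hk ▸ hFc.sub continuousOn_const
  have hkd : DifferentiableOn ℂ k (ball 0 1) := hk ▸ hFd.sub_const _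
  have hk0 : k 0 = 0 := by rw [hk]; simp
  have hkh : HolderS k := hk ▸ hFh.sub (holderS_const _)
  have hzero := hort k hkc hkd hkh hk0
  -- by the mean value property the holomorphic part of `g` does not contribute
  obtain ⟨W, hW⟩ : ∃ W : ℂ → ℂ, W = fun ζ => ((1 / 2) * T ζ + (1 / 2) * star (F 0)) * k ζ :=
    ⟨_, rfl⟩
  have hcl : closure (ball (0 : ℂ) 1) = closedBall 0 1 := closure_ball _ one_ne_zero
  have hWc : ContinuousOn W (closedBall 0 1) := hW ▸
    ((continuousOn_const.mul hTc).add continuousOn_const).mul hkc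
  have hWd : DifferentiableOn ℂ W (ball 0 1) := hW ▸
    ((hTd.const_mul _).add_const _).mul hkd
  have hWavg : Real.circleAverage W 0 1 = 0 := by
    have : DiffContOnCl ℂ W (ball 0 |(1 : ℝ)|) := by
      rw [abs_one]; exact ⟨hWd, by rwa [hcl]⟩
    rw [this.circleAverage, hW]
    simp [hk0]
  have hsub : sphere (0 : ℂ) 1 ⊆ closedBall 0 1 := sphere_subset_closedBall
  have hWre := circleAverage_re (hWc.mono hsub)
  rw [hWavg, Complex.zero_re] at hWre
  have hksph : ContinuousOn (fun ζ => (1 / 2 : ℝ) * ‖k ζ‖ ^ 2) (sphere 0 1) :=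
    continuousOn_const.mul ((hkc.mono hsub).norm.pow 2)
  have hsum : Real.circleAverage (fun ζ => (1 / 2 : ℝ) * ‖k ζ‖ ^ 2) 0 1 = 0 := by
    have e : Real.circleAverage (fun ζ => (g ζ * k ζ).re) 0 1 =
        Real.circleAverage (fun ζ => (W ζ).re + (1 / 2 : ℝ) * ‖k ζ‖ ^ 2) 0 1 := by
      refine Real.circleAverage_congr_sphere ?_
      rw [abs_one]
      intro ζ hζ
      show (g ζ * k ζ).re = (W ζ).re + (1 / 2 : ℝ) * ‖k ζ‖ ^ 2
      have e1 : g ζ * k ζ = W ζ + (((1 / 2 : ℝ) * ‖k ζ‖ ^ 2 : ℝ) : ℂ) := by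
        have e2 : star (k ζ) * k ζ = ((‖k ζ‖ ^ 2 : ℝ) : ℂ) := by
          rw [mul_comm, Complex.star_def, Complex.mul_conj, Complex.normSq_eq_norm_sq]
        have e3 : star (F ζ) = star (F 0) + star (k ζ) := by rw [hk]; simp
        rw [Complex.ofReal_mul, ← e2, hsplit ζ hζ, e3, hW]
        push_cast
        ring
      rw [e1, Complex.add_re, Complex.ofReal_re]
    have hWr : ContinuousOn (fun ζ => (W ζ).re) (sphere 0 1) :=
      Complex.continuous_re.comp_continuousOn (hWc.mono hsub)
    rw [e, Real.circleAverage_fun_add (circleIntegrable_of_sphere hWr)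
      (circleIntegrable_of_sphere hksph), hWre, zero_add] at hzero
    exact hzero
  have hkzero := eq_zero_of_circleAverage_eq_zero hksph (fun ζ _ => by positivity) hsum
  refine ⟨fun ζ => (1 / 2) * T ζ + (1 / 2) * star (F 0),
    (continuousOn_const.mul hTc).add continuousOn_const, (hTd.const_mul _).add_const _, ?_⟩
  intro ζ hζ
  have h1 : k ζ = 0 := by simpa using hkzero ζ hζ
  have h2 : F ζ = F 0 := by rw [hk] at h1; exact sub_eq_zero.1 h1
  rw [hsplit ζ hζ, h2]

end Dual

/-! ### First variation -/

section Variation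
variable {n : ℕ} {ρ : Cn n → ℝ} {D U : Set (Cn n)}

/-- Near a boundary circle point, an infinitesimal motion pointing into `D` enters `D`. -/
theorem IsConvexDomain.exists_uniform_step (h : IsConvexDomain ρ D U) {A φ : ℂ → Cn n}
    (hAc : ContinuousOn A (closedBall 0 1)) (hφc : ContinuousOn φ (closedBall 0 1))
    (hAf : ∀ ζ ∈ sphere (0 : ℂ) 1, A ζ ∈ frontier D)
    (hneg : ∀ ζ ∈ sphere (0 : ℂ) 1, fderiv ℝ ρ (A ζ) (φ ζ) < 0) :
    ∃ t₀ > (0 : ℝ), ∀ ζ ∈ sphere (0 : ℂ) 1, ∀ t ∈ Ioc 0 t₀, A ζ + t • φ ζ ∈ D := by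
  have hsub : sphere (0 : ℂ) 1 ⊆ closedBall 0 1 := sphere_subset_closedBall
  refine (isCompact_sphere (0 : ℂ) 1).induction_on
    (p := fun S => ∃ t₀ > (0 : ℝ), ∀ ζ ∈ S, ∀ t ∈ Ioc 0 t₀, A ζ + t • φ ζ ∈ D)
    ⟨1, one_pos, by simp⟩ ?_ ?_ ?_
  · rintro S T hST ⟨c, hc, hT⟩
    exact ⟨c, hc, fun b hb => hT b (hST hb)⟩
  · rintro S T ⟨c, hc, hS⟩ ⟨c', hc', hT⟩
    refine ⟨min c c', lt_min hc hc', ?_⟩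
    rintro ζ (hζ | hζ) t ht
    · exact hS ζ hζ t ⟨ht.1, ht.2.trans (min_le_left _ _)⟩
    · exact hT ζ hζ t ⟨ht.1, ht.2.trans (min_le_right _ _)⟩
  · intro w hw
    have hwU := h.frontier_subset (hAf w hw)
    obtain ⟨m, hm⟩ : ∃ m, m = -fderiv ℝ ρ (A w) (φ w) := ⟨_, rfl⟩
    have hm0 : 0 < m := by rw [hm]; linarith [hneg w hw]
    obtain ⟨N, hN⟩ : ∃ N, N = ‖φ w‖ + 1 := ⟨_, rfl⟩
    have hN0 : 0 < N := by rw [hN]; positivity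
    have hstrict := (h.analytic _ hwU).hasStrictFDerivAt
    have hlo := hstrict.isLittleO.def (c := m / (4 * N)) (by positivity)
    -- `(ζ, t) ↦ (A ζ + t φ ζ, A ζ)` tends to `(A w, A w)`
    have hA : Tendsto A (𝓝[sphere 0 1] w) (𝓝 (A w)) := (hAc.mono hsub) w hw
    have hφ : Tendsto φ (𝓝[sphere 0 1] w) (𝓝 (φ w)) := (hφc.mono hsub) w hw
    have hA' : Tendsto (fun x : ℂ × ℝ => A x.1) (𝓝[sphere 0 1] w ×ˢ 𝓝 0) (𝓝 (A w)) :=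
      hA.comp tendsto_fst
    have hφ' : Tendsto (fun x : ℂ × ℝ => φ x.1) (𝓝[sphere 0 1] w ×ˢ 𝓝 0) (𝓝 (φ w)) :=
      hφ.comp tendsto_fst
    have ht' : Tendsto (fun x : ℂ × ℝ => x.2) (𝓝[sphere 0 1] w ×ˢ 𝓝 0) (𝓝 0) := tendsto_snd
    have hAt : Tendsto (fun x : ℂ × ℝ => A x.1 + x.2 • φ x.1) (𝓝[sphere 0 1] w ×ˢ 𝓝 0)
        (𝓝 (A w)) := by
      simpa using hA'.add (ht'.smul hφ')
    have hder : Tendsto (fun x : ℂ × ℝ => fderiv ℝ ρ (A w) (φ x.1))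
        (𝓝[sphere 0 1] w ×ˢ 𝓝 0) (𝓝 (-m)) := by
      rw [hm, neg_neg]
      exact ((fderiv ℝ ρ (A w)).continuous.tendsto _).comp hφ'
    have hev := (((hAt.prodMk_nhds hA').eventually hlo).and
      (hder.eventually (gt_mem_nhds (show -m < -(m / 2) by linarith)))).and
      ((hφ'.norm.eventually (gt_mem_nhds (show ‖φ w‖ < N by rw [hN]; linarith))).and
      (hAt.eventually (h.isOpen_nhd.mem_nhds hwU)))
    obtain ⟨P, hP, Q, hQ, hPQ⟩ := eventually_prod_iff.1 hev
    obtain ⟨δ, hδ, hQδ⟩ := Metric.eventually_nhds_iff.1 hQ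
    refine ⟨{ζ | P ζ} ∩ sphere 0 1, inter_mem hP self_mem_nhdsWithin, δ / 2, half_pos hδ, ?_⟩
    rintro ζ ⟨hζ, hζs⟩ t ⟨ht0, ht1⟩
    obtain ⟨⟨e1, e2⟩, e3, e4⟩ := hPQ hζ (hQδ (y := t) (by
      rw [dist_eq_norm, sub_zero, Real.norm_eq_abs, abs_of_pos ht0]; linarith))
    simp only at e1 e2 e3 e4
    refine h.mem_of_neg e4 ?_
    rw [h.eq_zero (hAf ζ hζs), sub_zero, add_sub_cancel_left, map_smul, norm_smul,
      Real.norm_eq_abs, Real.norm_eq_abs, abs_of_pos ht0, smul_eq_mul] at e1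
    have e5 := (le_abs_self _).trans e1
    have e6 : m / (4 * N) * (t * ‖φ ζ‖) ≤ m / 4 * t := by
      calc m / (4 * N) * (t * ‖φ ζ‖) ≤ m / (4 * N) * (t * N) := by gcongr
        _ = m / 4 * t := by field_simp
    nlinarith

/-- First variation: no infinitesimal motion `φ` of an extremal disc with `φ 0 = 0` and `φ' 0 = 0`
points strictly into `D` along the whole boundary. -/
theorem IsConvexDomain.no_variation (h : IsConvexDomain ρ D U) {z v : Cn n} (hv : v ≠ 0) {lam : ℝ}
    {A φ : ℂ → Cn n} (hA : IsExtremal (closure D) z v lam A)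
    (hAc : ContinuousOn A (closedBall 0 1)) (hAf : ∀ ζ ∈ sphere (0 : ℂ) 1, A ζ ∈ frontier D)
    (hφc : ContinuousOn φ (closedBall 0 1)) (hφd : DifferentiableOn ℂ φ (ball 0 1))
    (hφ0 : φ 0 = 0) (hφ1 : deriv φ 0 = 0)
    (hneg : ∀ ζ ∈ sphere (0 : ℂ) 1, fderiv ℝ ρ (A ζ) (φ ζ) < 0) : False := by
  obtain ⟨t, ht, hin⟩ := h.exists_uniform_step hAc hφc hAf hneg
  have hb : ball (0 : ℂ) 1 ∈ 𝓝 0 := isOpen_ball.mem_nhds (mem_ball_self one_pos)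
  refine hA.no_closed_competitor h.isOpen h.convex hv (h := fun ζ => A ζ + (t : ℂ) • φ ζ)
    (hAc.add (hφc.const_smul (t : ℂ))) (hA.hol.add (hφd.const_smul (t : ℂ))) (by simp [hφ0, hA.zero]) ?_
    fun ζ hζ => ?_
  · have h2 : DifferentiableAt ℂ φ 0 := hφd.differentiableAt hb
    have := (hA.hol.differentiableAt hb).hasDerivAt.add (h2.hasDerivAt.const_smul (t : ℂ))
    rw [hφ1, hA.der, smul_zero, add_zero] at this
    exact this.deriv
  · have := hin ζ hζ t ⟨ht, le_rfl⟩
    rwa [show t • φ ζ = (t : ℂ) • φ ζ from (Complex.coe_smul _ _).symm] at this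

end Variation

/-! ### Existence -/

section Existence
variable {n : ℕ} {ρ : Cn n → ℝ} {D U : Set (Cn n)}

theorem IsConvexDomain.ne_of_mem_frontier (h : IsConvexDomain ρ D U) {z b : Cn n} (hz : z ∈ D)
    (hb : b ∈ frontier D) : z ≠ b := by
  rintro rfl
  rw [h.isOpen.frontier_eq] at hb
  exact hb.2 hz

/-- Every point of `closure D` other than `b` lies strictly on the inner side of the real tangent
hyperplane at `b`, expressed through the complex pairing. -/
theorem IsConvexDomain.re_pairing_pos (h : IsConvexDomain ρ D U) {x b : Cn n}
    (hx : x ∈ closure D) (hb : b ∈ frontier D) (hne : x ≠ b) :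
    0 < (∑ j, wirtinger ρ b j * (b j - x j)).re := by
  obtain ⟨c, hc, hs⟩ := h.strong_support
  have h1 := hs b hb x hx
  have h2 : 0 < c * ‖x - b‖ ^ 2 := by
    have := norm_pos_iff.2 (sub_ne_zero.2 hne)
    positivity
  rw [← map_neg, neg_sub, fderiv_eq_wirtinger] at h1
  simp only [PiLp.sub_apply] at h1
  linarith

theorem IsConvexDomain.re_pairing_nonneg (h : IsConvexDomain ρ D U) {x b : Cn n}
    (hx : x ∈ closure D) (hb : b ∈ frontier D) :
    0 ≤ (∑ j, wirtinger ρ b j * (b j - x j)).re := by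
  by_cases hne : x = b
  · simp [hne]
  · exact (h.re_pairing_pos hx hb hne).le

/-- An extremal disc is stationary. The weight `p` is chosen so that `p ∑ j, ∂_j ρ(A) (A_j - z_j)`
is the boundary value of a zero-free holomorphic function `E`. Orthogonality of `ζ p ∂_j ρ(A)` to a
holomorphic `k` with `k 0 = 0` follows by testing the first variation with
`φ = -a (ζ k e_j + (a - H) E⁻¹ (A - z))`. Here `a` is the mean of `Re (ζ p ∂_j ρ(A) k)` and `H` is the
holomorphic function with this real part; then `Re (p ∑ j, ∂_j ρ(A) φ_j) = -a²` on the circle, so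
`a ≠ 0` is impossible. -/
theorem IsConvexDomain.exists_dual (h : IsConvexDomain ρ D U) {z v : Cn n} (hz : z ∈ D)
    (hv : v ≠ 0) {lam : ℝ} {A : ℂ → Cn n} (hA : IsExtremal (closure D) z v lam A)
    (hAc : ContinuousOn A (closedBall 0 1)) (hAh : HolderS A)
    (hAf : ∀ ζ ∈ sphere (0 : ℂ) 1, A ζ ∈ frontier D) :
    ∃ p : ℂ → ℝ, ContinuousOn p (sphere 0 1) ∧ (∀ ζ ∈ sphere (0 : ℂ) 1, 0 < p ζ) ∧
      ∃ G : ℂ → Cn n, ContinuousOn G (closedBall 0 1) ∧ DifferentiableOn ℂ G (ball 0 1) ∧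
      ∀ ζ ∈ sphere (0 : ℂ) 1, ∀ j, G ζ j = ζ * (p ζ : ℂ) * wirtinger ρ (A ζ) j := by
  have hnh : ∀ j, HolderS (fun ζ => wirtinger ρ (A ζ) j) := fun j => by
    obtain ⟨L, hL0, hL⟩ := h.wirtinger_lipschitz j
    exact hAh.lip hL0 fun x hx y hy => hL _ (hAf x hx) _ (hAf y hy)
  have hAj : ∀ j, HolderS (fun ζ => A ζ j - z j) := fun j => by
    refine hAh.lip zero_le_one fun x _ y _ => ?_
    rw [one_mul, sub_sub_sub_cancel_right]
    exact PiLp.norm_apply_le (A x - A y) j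
  obtain ⟨p, E, hph, hp0, hEc, hEd, hE0, hpE⟩ := exists_multiplier
    (HolderS.sum Finset.univ fun j _ => (hnh j).mul (hAj j))
    (fun ζ hζ => h.re_pairing_pos (subset_closure hz) (hAf ζ hζ)
      (h.ne_of_mem_frontier hz (hAf ζ hζ)))
  have hb : ball (0 : ℂ) 1 ∈ 𝓝 0 := isOpen_ball.mem_nhds (mem_ball_self one_pos)
  have hgh : ∀ j, HolderS (fun ζ : ℂ => ζ * (p ζ : ℂ) * wirtinger ρ (A ζ) j) := fun j =>
    (holderS_id.mul hph.ofReal).mul (hnh j)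
  have hG : ∀ j, ∃ G : ℂ → ℂ, ContinuousOn G (closedBall 0 1) ∧ DifferentiableOn ℂ G (ball 0 1) ∧
      ∀ ζ ∈ sphere (0 : ℂ) 1, G ζ = ζ * (p ζ : ℂ) * wirtinger ρ (A ζ) j := by
    intro j
    refine exists_holo_of_orthogonal (hgh j) fun k hkc hkd hkh hk0 => ?_
    by_contra ha
    obtain ⟨H, hHc, hHd, -, hHre, hH0⟩ := privalov ((hgh j).mul hkh).re
    obtain ⟨a, haa⟩ : ∃ a : ℝ, a = Real.circleAverage
      (fun ζ => (ζ * (p ζ : ℂ) * wirtinger ρ (A ζ) j * k ζ).re) 0 1 := ⟨_, rfl⟩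
    rw [← haa] at ha hH0
    obtain ⟨u, hu⟩ : ∃ u : ℂ → ℂ, u = fun ζ => (a - H ζ) * (E ζ)⁻¹ := ⟨_, rfl⟩
    have huc : ContinuousOn u (closedBall 0 1) :=
      hu ▸ (continuousOn_const.sub hHc).mul (hEc.inv₀ fun ζ _ => hE0 ζ)
    have hud : DifferentiableOn ℂ u (ball 0 1) :=
      hu ▸ (hHd.const_sub _).mul (hEd.inv fun ζ _ => hE0 ζ)
    have hu0 : u 0 = 0 := by rw [hu]; simp [hH0]
    have hid : DifferentiableOn ℂ (fun ζ : ℂ => ζ) (ball 0 1) := differentiableOn_id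
    obtain ⟨φ, hφ⟩ : ∃ φ : ℂ → Cn n, φ = fun ζ => (-a : ℂ) •
      ((ζ * k ζ) • EuclideanSpace.single j (1 : ℂ) + u ζ • (A ζ - z)) := ⟨_, rfl⟩
    refine h.no_variation hv (φ := φ) hA hAc hAf ?_ ?_ ?_ ?_ ?_
    · rw [hφ]
      exact (((continuousOn_id.mul hkc).smul continuousOn_const).add
        (huc.smul (hAc.sub continuousOn_const))).const_smul (-a : ℂ)
    · rw [hφ]
      exact (((hid.mul hkd).smul_const _).add
        (hud.smul (hA.hol.sub_const _))).const_smul (-a : ℂ)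
    · rw [hφ]; simp [hu0]
    · have d1 := ((hasDerivAt_id (0 : ℂ)).mul (hkd.differentiableAt hb).hasDerivAt).smul_const
        (EuclideanSpace.single j (1 : ℂ))
      have d2 := (hud.differentiableAt hb).hasDerivAt.smul
        ((hA.hol.differentiableAt hb).hasDerivAt.sub_const z)
      have := (d1.add d2).const_smul (-a : ℂ)
      rw [hφ]
      refine HasDerivAt.deriv (HasDerivAt.congr_deriv this ?_)
      simp [hk0, hu0, hA.zero]
    · intro ζ hζ
      have hp := hp0 ζ hζ
      have e1 : (p ζ : ℂ) * ∑ i, wirtinger ρ (A ζ) i * φ ζ i =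
          -a * (ζ * (p ζ : ℂ) * wirtinger ρ (A ζ) j * k ζ + (a - H ζ)) := by
        have e2 : ∑ i, wirtinger ρ (A ζ) i * φ ζ i = -a * (wirtinger ρ (A ζ) j * (ζ * k ζ) +
            u ζ * ∑ i, wirtinger ρ (A ζ) i * (A ζ i - z i)) := by
          rw [Finset.mul_sum, mul_add, Finset.mul_sum, hφ]
          have : ∀ i, wirtinger ρ (A ζ) i * (((-a : ℂ) •
              ((ζ * k ζ) • EuclideanSpace.single j (1 : ℂ) + u ζ • (A ζ - z)) : Cn n) i) =
              (if i = j then -a * (wirtinger ρ (A ζ) j * (ζ * k ζ)) else 0) +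
              -a * (u ζ * (wirtinger ρ (A ζ) i * (A ζ i - z i))) := by
            intro i
            simp only [PiLp.smul_apply, PiLp.add_apply, PiLp.sub_apply, PiLp.single_apply,
              smul_eq_mul]
            split_ifs with hij
            · rw [hij]; ring
            · ring
          simp only [this, Finset.sum_add_distrib]
          simp
        have e3 : u ζ * ((p ζ : ℂ) * ∑ i, wirtinger ρ (A ζ) i * (A ζ i - z i)) = a - H ζ := by
          rw [hpE ζ hζ, hu]
          simp [hE0 ζ]
        rw [e2, ← e3]
        ring
      have e4 := congrArg Complex.re e1
      rw [Complex.re_ofReal_mul, ← Complex.ofReal_neg, Complex.re_ofReal_mul, Complex.add_re,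
        Complex.sub_re, hHre ζ hζ, Complex.ofReal_re] at e4
      rw [fderiv_eq_wirtinger]
      have e5 : 0 < a ^ 2 := by positivity
      nlinarith
  choose G hGc hGd hGe using hG
  refine ⟨p, hph.continuousOn, hp0, fun ζ => WithLp.toLp 2 fun j => G j ζ, ?_, ?_, ?_⟩
  · exact (PiLp.continuous_toLp 2 _).comp_continuousOn (continuousOn_pi.2 hGc)
  · rw [differentiableOn_euclidean]
    exact hGd
  · intro ζ hζ j
    exact hGe j ζ hζ

theorem IsConvexDomain.exists_stationary (h : IsConvexDomain ρ D U) {z v : Cn n} (hz : z ∈ D)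
    (hv : v ≠ 0) : ∃ A : ℂ → Cn n, IsStationaryDisc ρ D A ∧ A 0 = z ∧
      ∃ lam : ℂ, lam ≠ 0 ∧ deriv A 0 = lam • v := by
  obtain ⟨lam, A, hA, hAc, hAh, hAf⟩ := h.exists_regular_extremal hz hv
  have hl : (lam : ℂ) ≠ 0 := Complex.ofReal_ne_zero.2 hA.pos.ne'
  refine ⟨A, ⟨hAc, hA.hol, ?_, ?_, hAf, h.exists_dual hz hv hA hAc hAh hAf⟩, hA.zero, lam, hl,
    hA.der⟩
  · rintro ⟨c, hc⟩
    have : A =ᶠ[𝓝 0] fun _ => c := by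
      filter_upwards [closedBall_mem_nhds (0 : ℂ) one_pos] with ζ hζ using hc ζ hζ
    have h1 := hA.der
    rw [this.deriv_eq, deriv_const] at h1
    exact smul_ne_zero hl hv h1.symm
  · intro ζ hζ
    rw [← ball_union_sphere] at hζ
    rcases hζ with hζ | hζ
    · exact hA.maps ζ hζ
    · exact frontier_subset_closure (hAf ζ hζ)

end Existence

/-! ### Uniqueness -/

section Uniqueness
variable {n : ℕ} {ρ : Cn n → ℝ} {D U : Set (Cn n)}

/-- Composition with a rotation of the parameter preserves stationarity: the dual map `G` is
replaced by `ζ ↦ c⁻¹ G (c ζ)`. -/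
theorem IsStationaryDisc.rotate {A : ℂ → Cn n} (hA : IsStationaryDisc ρ D A) {c : ℂ}
    (hc : ‖c‖ = 1) : IsStationaryDisc ρ D (fun ζ => A (c * ζ)) := by
  obtain ⟨hAc, hAd, hne, hAD, hAf, p, hp, hp0, G, hGc, hGd, hG⟩ := hA
  have hc0 : c ≠ 0 := by rintro rfl; simp at hc
  have m1 : MapsTo (fun ζ : ℂ => c * ζ) (closedBall 0 1) (closedBall 0 1) := fun ζ hζ => by
    simpa [hc] using hζ
  have m2 : MapsTo (fun ζ : ℂ => c * ζ) (ball 0 1) (ball 0 1) := fun ζ hζ => by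
    simpa [hc] using hζ
  have m3 : MapsTo (fun ζ : ℂ => c * ζ) (sphere 0 1) (sphere 0 1) := fun ζ hζ => by
    simpa [hc] using hζ
  have hcont : Continuous fun ζ : ℂ => c * ζ := by fun_prop
  have hdiff : Differentiable ℂ fun ζ : ℂ => c * ζ := by fun_prop
  refine ⟨hAc.comp hcont.continuousOn m1, hAd.comp hdiff.differentiableOn m2, ?_,
    fun ζ hζ => hAD _ (m1 hζ), fun ζ hζ => hAf _ (m3 hζ), fun ζ => p (c * ζ),
    hp.comp hcont.continuousOn m3, fun ζ hζ => hp0 _ (m3 hζ), fun ζ => c⁻¹ • G (c * ζ), ?_, ?_, ?_⟩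
  · rintro ⟨b, hb⟩
    refine hne ⟨b, fun ζ hζ => ?_⟩
    have := hb (c⁻¹ * ζ) (by simpa [hc] using hζ)
    simpa only [mul_inv_cancel_left₀ hc0] using this
  · exact (hGc.comp hcont.continuousOn m1).const_smul c⁻¹
  · exact (hGd.comp hdiff.differentiableOn m2).const_smul c⁻¹
  · intro ζ hζ j
    show c⁻¹ * G (c * ζ) j = _
    rw [hG _ (m3 hζ) j]
    field_simp

/-- The mean value property for the pairing of the dual map of a stationary disc `A` with
`(A - B) / ζ`. -/
theorem circleAverage_pairing {A B G : ℂ → Cn n} {p : ℂ → ℝ}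
    (hAc : ContinuousOn A (closedBall 0 1)) (hAd : DifferentiableOn ℂ A (ball 0 1))
    (hBc : ContinuousOn B (closedBall 0 1)) (hBd : DifferentiableOn ℂ B (ball 0 1))
    (h0 : A 0 = B 0)
    (hGc : ContinuousOn G (closedBall 0 1)) (hGd : DifferentiableOn ℂ G (ball 0 1))
    (hG : ∀ ζ ∈ sphere (0 : ℂ) 1, ∀ j, G ζ j = ζ * (p ζ : ℂ) * wirtinger ρ (A ζ) j) :
    ContinuousOn (fun ζ => p ζ * (∑ j, wirtinger ρ (A ζ) j * (A ζ j - B ζ j)).re) (sphere 0 1) ∧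
    Real.circleAverage (fun ζ => p ζ * (∑ j, wirtinger ρ (A ζ) j * (A ζ j - B ζ j)).re) 0 1 =
      (∑ j, G 0 j * (deriv A 0 j - deriv B 0 j)).re := by
  have hb : ball (0 : ℂ) 1 ∈ 𝓝 0 := isOpen_ball.mem_nhds (mem_ball_self one_pos)
  have hcb : closedBall (0 : ℂ) 1 ∈ 𝓝 0 := closedBall_mem_nhds 0 one_pos
  have hsub : sphere (0 : ℂ) 1 ⊆ closedBall 0 1 := sphere_subset_closedBall
  have dA := hAd.differentiableAt hb
  have dB := hBd.differentiableAt hb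
  have hSc : ContinuousOn (dslope (A - B) 0) (closedBall 0 1) :=
    (continuousOn_dslope hcb).2 ⟨hAc.sub hBc, dA.sub dB⟩
  have hSd : DifferentiableOn ℂ (dslope (A - B) 0) (ball 0 1) :=
    (Complex.differentiableOn_dslope hb).2 (hAd.sub hBd)
  obtain ⟨H, hH⟩ : ∃ H : ℂ → ℂ, H = fun ζ => ∑ j, G ζ j * dslope (A - B) 0 ζ j := ⟨_, rfl⟩
  have pc : ∀ {F : ℂ → Cn n}, ContinuousOn F (closedBall 0 1) → ∀ j,
      ContinuousOn (fun ζ => F ζ j) (closedBall 0 1) := fun hF j =>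
    (EuclideanSpace.proj j : Cn n →L[ℂ] ℂ).continuous.comp_continuousOn hF
  have pd : ∀ {F : ℂ → Cn n}, DifferentiableOn ℂ F (ball 0 1) → ∀ j,
      DifferentiableOn ℂ (fun ζ => F ζ j) (ball 0 1) := fun hF => differentiableOn_euclidean.1 hF
  have hHc : ContinuousOn H (closedBall 0 1) := by
    rw [hH]
    exact continuousOn_finsetSum _ fun j _ => (pc hGc j).mul (pc hSc j)
  have hHd : DifferentiableOn ℂ H (ball 0 1) := by
    rw [hH]
    exact DifferentiableOn.fun_sum fun j _ => (pd hGd j).mul (pd hSd j)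
  have heq : ∀ ζ ∈ sphere (0 : ℂ) 1,
      p ζ * (∑ j, wirtinger ρ (A ζ) j * (A ζ j - B ζ j)).re = (H ζ).re := by
    intro ζ hζ
    have hζ0 : ζ ≠ 0 := by rintro rfl; simp at hζ
    rw [← Complex.re_ofReal_mul, hH, Finset.mul_sum]
    congr 1
    refine Finset.sum_congr rfl fun j _ => ?_
    rw [hG ζ hζ j, dslope_of_ne _ hζ0, slope_def_module]
    simp only [sub_zero, Pi.sub_apply, h0, sub_self, PiLp.smul_apply, PiLp.sub_apply, smul_eq_mul]
    field_simp
  have hHre : ContinuousOn (fun ζ => (H ζ).re) (sphere 0 1) :=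
    Complex.continuous_re.comp_continuousOn (hHc.mono hsub)
  refine ⟨hHre.congr heq, ?_⟩
  have e : Real.circleAverage H 0 1 = H 0 := by
    have : DiffContOnCl ℂ H (ball 0 |(1 : ℝ)|) := by
      rw [abs_one]; exact ⟨hHd, by rwa [closure_ball _ one_ne_zero]⟩
    exact this.circleAverage
  rw [Real.circleAverage_congr_sphere (by rw [abs_one]; exact heq), circleAverage_re
    (hHc.mono hsub), e, hH]
  simp only [dslope_same, deriv_sub dA dB, PiLp.sub_apply]

/-- A stationary disc strictly dominates every other disc with the same centre and direction: the
real part of the pairing with `A - B` is nonnegative on the circle, and positive wherever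
`A ≠ B`. -/
theorem IsConvexDomain.stationary_dominates (h : IsConvexDomain ρ D U) {z v : Cn n} (hz : z ∈ D)
    {A B : ℂ → Cn n} (hA : IsStationaryDisc ρ D A) (hA0 : A 0 = z) {a b : ℝ} (ha : 0 < a)
    (hAv : deriv A 0 = (a : ℂ) • v) (hBc : ContinuousOn B (closedBall 0 1))
    (hBd : DifferentiableOn ℂ B (ball 0 1)) (hBD : ∀ ζ ∈ sphere (0 : ℂ) 1, B ζ ∈ closure D)
    (hB0 : B 0 = z) (hBv : deriv B 0 = (b : ℂ) • v) :
    b ≤ a ∧ (a = b → ∀ ζ ∈ closedBall (0 : ℂ) 1, A ζ = B ζ) := by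
  obtain ⟨hAc, hAd, hne, hAD, hAf, p, hp, hp0, G, hGc, hGd, hG⟩ := hA
  obtain ⟨S, hS⟩ : ∃ S : ℝ, S = (∑ j, G 0 j * v j).re := ⟨_, rfl⟩
  have hlin : ∀ s : ℝ, (∑ j, G 0 j * ((a : ℂ) * v j - (s : ℂ) * v j)).re = (a - s) * S := by
    intro s
    rw [hS, ← Complex.re_ofReal_mul, Finset.mul_sum]
    congr 1
    refine Finset.sum_congr rfl fun j _ => ?_
    push_cast; ring
  have hSpos : 0 < S := by
    obtain ⟨c1, c2⟩ := circleAverage_pairing hAc hAd (B := fun _ => z) continuousOn_const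
      (differentiableOn_const z) hA0 hGc hGd hG
    have hpos : ∀ ζ ∈ sphere (0 : ℂ) 1,
        0 < p ζ * (∑ j, wirtinger ρ (A ζ) j * (A ζ j - z j)).re := fun ζ hζ =>
      mul_pos (hp0 ζ hζ) (h.re_pairing_pos (subset_closure hz) (hAf ζ hζ)
        (h.ne_of_mem_frontier hz (hAf ζ hζ)))
    have hnn := Real.circleAverage_nonneg_of_nonneg (c := (0 : ℂ)) (R := 1)
      (f := fun ζ => p ζ * (∑ j, wirtinger ρ (A ζ) j * (A ζ j - z j)).re)
      (fun ζ hζ => (hpos ζ (by rwa [abs_one] at hζ)).le)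
    have hl := hlin 0
    simp only [Complex.ofReal_zero, zero_mul, sub_zero] at hl
    rw [hAv] at c2
    simp only [deriv_const, PiLp.smul_apply, PiLp.zero_apply, smul_eq_mul, sub_zero] at c2
    rw [hl] at c2
    rcases hnn.lt_or_eq with h1 | h1
    · rw [c2] at h1
      exact pos_of_mul_pos_right h1 ha.le
    · have := eq_zero_of_circleAverage_eq_zero c1 (fun ζ hζ => (hpos ζ hζ).le) h1.symm 1 (by simp)
      exact absurd this (hpos 1 (by simp)).ne'
  obtain ⟨c1, c2⟩ := circleAverage_pairing hAc hAd hBc hBd (hA0.trans hB0.symm) hGc hGd hG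
  have hnn : ∀ ζ ∈ sphere (0 : ℂ) 1,
      0 ≤ p ζ * (∑ j, wirtinger ρ (A ζ) j * (A ζ j - B ζ j)).re := fun ζ hζ =>
    mul_nonneg (hp0 ζ hζ).le (h.re_pairing_nonneg (hBD ζ hζ) (hAf ζ hζ))
  have havg := Real.circleAverage_nonneg_of_nonneg (c := (0 : ℂ)) (R := 1)
    (f := fun ζ => p ζ * (∑ j, wirtinger ρ (A ζ) j * (A ζ j - B ζ j)).re)
    (fun ζ hζ => hnn ζ (by rwa [abs_one] at hζ))
  rw [hAv, hBv] at c2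
  simp only [PiLp.smul_apply, smul_eq_mul] at c2
  rw [hlin b] at c2
  refine ⟨?_, fun hab => ?_⟩
  · rw [c2] at havg
    linarith [nonneg_of_mul_nonneg_left havg hSpos]
  · rw [hab, sub_self, zero_mul] at c2
    have hz0 := eq_zero_of_circleAverage_eq_zero c1 hnn c2
    have hsph : ∀ ζ ∈ sphere (0 : ℂ) 1, A ζ = B ζ := by
      intro ζ hζ
      by_contra hcon
      exact (mul_pos (hp0 ζ hζ) (h.re_pairing_pos (hBD ζ hζ) (hAf ζ hζ) (Ne.symm hcon))).ne'
        (hz0 ζ hζ)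
    have hcl : closure (ball (0 : ℂ) 1) = closedBall 0 1 := closure_ball _ one_ne_zero
    have := Complex.eqOn_closure_of_eqOn_frontier (f := A) (g := B) isBounded_ball
      ⟨hAd, by rwa [hcl]⟩ ⟨hBd, by rwa [hcl]⟩
      (by rw [frontier_ball _ one_ne_zero]; exact hsph)
    rwa [hcl] at this

/-- After rotations both derivatives are positive multiples of `v`, and each disc dominates the
other. -/
theorem IsConvexDomain.stationary_unique (h : IsConvexDomain ρ D U) {z v : Cn n} (hz : z ∈ D)
    {A B : ℂ → Cn n} (hA : IsStationaryDisc ρ D A) (hB : IsStationaryDisc ρ D B)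
    (hA0 : A 0 = z) (hB0 : B 0 = z) {α β : ℂ} (hα : α ≠ 0) (hβ : β ≠ 0)
    (hAv : deriv A 0 = α • v) (hBv : deriv B 0 = β • v) :
    ∃ θ : ℝ, ∀ ζ ∈ closedBall (0 : ℂ) 1, B ζ = A (Complex.exp (θ * Complex.I) * ζ) := by
  -- rotating a disc by the argument of its derivative makes that derivative a positive multiple
  have hrot : ∀ {F : ℂ → Cn n} {γ : ℂ}, IsStationaryDisc ρ D F → deriv F 0 = γ • v →
      deriv (fun ζ => F (Complex.exp (-(γ.arg : ℂ) * I) * ζ)) 0 = (‖γ‖ : ℂ) • v := by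
    intro F γ hF hγ
    have hd : DifferentiableAt ℂ F (Complex.exp (-(γ.arg : ℂ) * I) * 0) := by
      rw [mul_zero]
      exact hF.2.1.differentiableAt (isOpen_ball.mem_nhds (mem_ball_self one_pos))
    have h1 : HasDerivAt (fun ζ : ℂ => Complex.exp (-(γ.arg : ℂ) * I) * ζ)
        (Complex.exp (-(γ.arg : ℂ) * I)) 0 := by
      simpa using (hasDerivAt_id (0 : ℂ)).const_mul (Complex.exp (-(γ.arg : ℂ) * I))
    have h2 := (hd.hasDerivAt.scomp (0 : ℂ) h1).deriv
    rw [mul_zero, hγ, smul_smul] at h2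
    refine h2.trans ?_
    congr 1
    calc Complex.exp (-(γ.arg : ℂ) * I) * γ
        = Complex.exp (-(γ.arg : ℂ) * I) * (‖γ‖ * Complex.exp (γ.arg * I)) := by
          rw [Complex.norm_mul_exp_arg_mul_I]
      _ = ‖γ‖ * Complex.exp (-(γ.arg : ℂ) * I + γ.arg * I) := by rw [Complex.exp_add]; ring
      _ = ‖γ‖ := by rw [neg_mul, neg_add_cancel, Complex.exp_zero, mul_one]
  have hn : ∀ γ : ℂ, ‖Complex.exp (-(γ.arg : ℂ) * I)‖ = 1 := fun γ => by
    rw [← Complex.ofReal_neg, Complex.norm_exp_ofReal_mul_I]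
  have rA := hA.rotate (hn α)
  have rB := hB.rotate (hn β)
  have dom := fun {a b : ℝ} {F K : ℂ → Cn n} (ha : 0 < a) (hF : IsStationaryDisc ρ D F)
    (hK : IsStationaryDisc ρ D K) (hF0 : F 0 = z) (hK0 : K 0 = z)
    (hFv : deriv F 0 = (a : ℂ) • v) (hKv : deriv K 0 = (b : ℂ) • v) =>
    h.stationary_dominates hz hF hF0 ha hFv hK.1 hK.2.1
      (fun ζ hζ => hK.2.2.2.1 ζ (sphere_subset_closedBall hζ)) hK0 hKv
  have z1 : (fun ζ => A (Complex.exp (-(α.arg : ℂ) * I) * ζ)) 0 = z := by simpa using hA0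
  have z2 : (fun ζ => B (Complex.exp (-(β.arg : ℂ) * I) * ζ)) 0 = z := by simpa using hB0
  have d1 := dom (norm_pos_iff.2 hα) rA rB z1 z2 (hrot hA hAv) (hrot hB hBv)
  have d2 := dom (norm_pos_iff.2 hβ) rB rA z2 z1 (hrot hB hBv) (hrot hA hAv)
  have heq := d1.2 (le_antisymm d2.1 d1.1)
  refine ⟨β.arg - α.arg, fun ζ hζ => ?_⟩
  have := heq (Complex.exp ((β.arg : ℂ) * I) * ζ) (by simpa using hζ)
  simp only [← mul_assoc, ← Complex.exp_add] at this
  rw [show -(β.arg : ℂ) * I + β.arg * I = 0 by ring, Complex.exp_zero, one_mul] at this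
  rw [← this]
  congr 3
  push_cast; ring

end Uniqueness

end Helpers

/-- **Lempert's theorem: existence and uniqueness of stationary discs.**
In a bounded strictly convex domain with real-analytic boundary, through every interior
point and in every direction there is a stationary disc, unique up to rotation of the
parameter. -/
theorem lempert_stationary_disc_exists_unique
    {n : ℕ} (hn : 2 ≤ n)
    (D : Set (EuclideanSpace ℂ (Fin n)))
    (hD_open : IsOpen D) (hD_conv : Convex ℝ D)
    (hD_bdd : Bornology.IsBounded D) (hD_ne : D.Nonempty)
    (U : Set (EuclideanSpace ℂ (Fin n))) (hU : IsOpen U) (hfrU : frontier D ⊆ U)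
    (ρ : EuclideanSpace ℂ (Fin n) → ℝ) (hρ : AnalyticOnNhd ℝ ρ U)
    (hρD : D ∩ U = {z | z ∈ U ∧ ρ z < 0})
    (hgrad : ∀ z ∈ frontier D, fderiv ℝ ρ z ≠ 0)
    (hhess : ∀ z ∈ frontier D, ∀ v : EuclideanSpace ℂ (Fin n), v ≠ 0 →
      0 < iteratedFDeriv ℝ 2 ρ z ![v, v])
    (z : EuclideanSpace ℂ (Fin n)) (hz : z ∈ D)
    (v : EuclideanSpace ℂ (Fin n)) (hv : v ≠ 0) :
    -- existence
    (∃ A : ℂ → EuclideanSpace ℂ (Fin n), IsStationaryDisc ρ D A ∧ A 0 = z ∧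
      ∃ lam : ℂ, lam ≠ 0 ∧ deriv A 0 = lam • v) ∧
    -- uniqueness up to rotation
    (∀ A B : ℂ → EuclideanSpace ℂ (Fin n),
      IsStationaryDisc ρ D A → IsStationaryDisc ρ D B →
      A 0 = z → B 0 = z →
      (∃ lamA : ℂ, lamA ≠ 0 ∧ deriv A 0 = lamA • v) →
      (∃ lamB : ℂ, lamB ≠ 0 ∧ deriv B 0 = lamB • v) →
      ∃ θ : ℝ, ∀ ζ ∈ closedBall (0 : ℂ) 1, B ζ = A (Complex.exp (θ * Complex.I) * ζ)) := by
  have h : IsConvexDomain ρ D U := ⟨hD_open, hD_conv, hD_bdd, hU, hfrU, hρ, hρD, hhess⟩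
  refine ⟨h.exists_stationary hz hv, ?_⟩
  rintro A B hA hB hA0 hB0 ⟨α, hα, hAv⟩ ⟨β, hβ, hBv⟩
  exact h.stationary_unique hz hA hB hA0 hB0 hα hβ hAv hBv
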